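/- arXiv:quant-ph/0407227 — 3 statements merged into one kernel-verified Lean document; each statement's English description precedes it below -/
import Mathlib

section
/- Bravyi's conditions: let ρ_1 and ρ_2 be 2×2 density matrices with eigenvalues λ_a ≤ μ_a = 1 − λ_a (a = 1,2), and let ρ_3 be a 4×4 density matrix with eigenvalues λ_3 ≤ μ_3 ≤ ν_3 ≤ ξ_3 (summing to 1). Then ρ_1, ρ_2, ρ_3 are the reduced states of a pure state (unit vector) in ℂ^2 ⊗ ℂ^2 ⊗ ℂ^4 if and only if: λ_a ≥ λ_3 + μ_3 for a = 1,2; λ_1 + λ_2 ≥ 2λ_3 + μ_3 + ν_3; and |λ_1 − λ_2| ≤ min{ν_3 − λ_3, ξ_3 − μ_3}. -/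
open scoped Matrix ComplexOrder

/-!
Purification reduces the three-party problem to two qubits: with `Ψ` read as a matrix
`A : ℂ⁴ → ℂ² ⊗ ℂ²`, the state `ρ = A Aᴴ` has the same spectrum as `ρ₃ = (Aᴴ A)ᵀ`. So the question is
which spectra `(λ₁, 1 - λ₁)`, `(λ₂, 1 - λ₂)` can occur for the reduced states of a two-qubit state
`ρ` with a prescribed spectrum.

*Necessity.* Let `u`, `v` be eigenbases of the reduced states. Ky Fan's principle on `u₀ ⊗ ℂ²` gives
`λ₃ + μ₃ ≤ λ₁`, and `λ₁ + λ₂ = 1 + ⟨u₀v₀|ρ|u₀v₀⟩ - ⟨u₁v₁|ρ|u₁v₁⟩` gives the bound on the sum. For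
the difference, every orthonormal basis `x` of the first qubit satisfies
`λ₁ - λ₂ ≤ ⟨x₀v₁|ρ|x₀v₁⟩ - ⟨x₁v₀|ρ|x₁v₀⟩`; choosing `x` so that `x₀ ⊗ v₁` is orthogonal to the top
eigenvector of `ρ`, or `x₁ ⊗ v₀` to the bottom one, yields the two bounds.

*Sufficiency.* If one of three pairings of the four eigenvalues is compatible with `λ₁`, `λ₂`, a
state that is block diagonal for the parity of the two qubits works. Otherwise take a state that is
block diagonal for the second qubit and rotate it in the span of `|01⟩, |10⟩`. The angle makes the
first marginal right, and along the remaining one-parameter family the intermediate value theorem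
produces the second one.
-/

namespace Bravyi

open Matrix Polynomial

section BasisMatrix

variable {ι κ : Type*} [Fintype ι] [Fintype κ]

/-- The matrix whose columns are the vectors of the orthonormal basis `b`. -/
noncomputable def basisMatrix (b : OrthonormalBasis κ ℂ (EuclideanSpace ℂ ι)) : Matrix ι κ ℂ :=
  of fun x k ↦ b k x

theorem conjTranspose_mul_basisMatrix [DecidableEq κ]
    (b : OrthonormalBasis κ ℂ (EuclideanSpace ℂ ι)) : (basisMatrix b)ᴴ * basisMatrix b = 1 := by
  ext k k'
  rw [one_apply, ← b.inner_eq_ite, EuclideanSpace.inner_eq_star_dotProduct, dotProduct_comm]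
  rfl

theorem basisMatrix_mul_conjTranspose [DecidableEq ι]
    (b : OrthonormalBasis κ ℂ (EuclideanSpace ℂ ι)) :
    basisMatrix b * (basisMatrix b)ᴴ = 1 := by
  classical
  have card_eq : Fintype.card κ = Fintype.card ι := by
    rw [← Module.finrank_eq_card_basis b.toBasis, finrank_euclideanSpace]
  exact (mul_eq_one_comm_of_card_eq _ _ _ card_eq).mp (conjTranspose_mul_basisMatrix b)

theorem sum_vecMulVec_orthonormalBasis [DecidableEq ι]
    (b : OrthonormalBasis κ ℂ (EuclideanSpace ℂ ι)) :
    ∑ k, vecMulVec (b k).ofLp (star (b k).ofLp) = 1 := by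
  rw [← basisMatrix_mul_conjTranspose b]
  ext x y
  simp only [Matrix.sum_apply, vecMulVec_apply, mul_apply, basisMatrix, of_apply,
    conjTranspose_apply, Pi.star_apply]

end BasisMatrix

section Spectrum

variable {ι κ : Type*} [Fintype ι] [DecidableEq ι] [Fintype κ]

/-- `A` is Hermitian and `l` enumerates its eigenvalues with multiplicity. The index type `κ` of the
spectrum is arbitrary, so that matrices over different index types can share a spectrum. -/
def HasSpectrum (A : Matrix ι ι ℂ) (l : κ → ℝ) : Prop :=
  A.IsHermitian ∧ A.charpoly = ∏ k, (X - C (l k : ℂ))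

/-- `b` diagonalises `A`, with the eigenvalues `l`. -/
def IsEigenbasis (A : Matrix ι ι ℂ) (l : κ → ℝ) (b : OrthonormalBasis κ ℂ (EuclideanSpace ℂ ι)) :
    Prop :=
  ∀ k, A *ᵥ b k = (l k : ℂ) • (b k).ofLp

theorem exists_equiv_comp_eq_of_map_eq {α β γ : Type*} [Fintype α] [Fintype β] {f : α → γ}
    {g : β → γ}
    (h : Multiset.map f Finset.univ.val = Multiset.map g Finset.univ.val) :
    ∃ e : α ≃ β, g ∘ e = f := by
  classical
  have card_fiber (c : γ) : Fintype.card {a // f a = c} = Fintype.card {b // g b = c} := by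
    simpa only [Multiset.count_map, Fintype.card_subtype, Finset.card_def, Finset.filter_val,
      eq_comm] using congrArg (Multiset.count c) h
  exact ⟨Equiv.ofFiberEquiv fun c ↦ Fintype.equivOfCardEq (card_fiber c),
    funext fun a ↦ Equiv.ofFiberEquiv_map _ a⟩

theorem hasSpectrum_eigenvalues {A : Matrix ι ι ℂ} (hA : A.IsHermitian) :
    HasSpectrum A hA.eigenvalues :=
  ⟨hA, hA.charpoly_eq⟩

namespace HasSpectrum

variable {A B : Matrix ι ι ℂ} {l : κ → ℝ}

theorem comp_equiv {κ' : Type*} [Fintype κ'] (h : HasSpectrum A l) (e : κ' ≃ κ) :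
    HasSpectrum A (l ∘ e) :=
  ⟨h.1, h.2.trans (e.prod_comp fun k ↦ X - C (l k : ℂ)).symm⟩

theorem exists_eq_eigenvalues_comp (h : HasSpectrum A l) :
    ∃ (hA : A.IsHermitian) (e : κ ≃ ι), l = hA.eigenvalues ∘ e := by
  have roots_eq : Multiset.map (fun k ↦ (l k : ℂ)) Finset.univ.val
      = Multiset.map (fun i ↦ (h.1.eigenvalues i : ℂ)) Finset.univ.val := by
    rw [← roots_multiset_prod_X_sub_C (Multiset.map _ _), Multiset.map_map]
    exact (congrArg roots h.2).symm.trans h.1.roots_charpoly_eq_eigenvalues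
  obtain ⟨e, he⟩ := exists_equiv_comp_eq_of_map_eq roots_eq
  exact ⟨h.1, e, funext fun k ↦ Complex.ofReal_injective (congrFun he k).symm⟩

theorem trace_eq (h : HasSpectrum A l) : A.trace = ((∑ k, l k : ℝ) : ℂ) := by
  obtain ⟨hA, e, rfl⟩ := h.exists_eq_eigenvalues_comp
  rw [hA.trace_eq_sum_eigenvalues, Complex.ofReal_sum]
  exact (e.sum_comp fun i ↦ (hA.eigenvalues i : ℂ)).symm

theorem nonneg (h : HasSpectrum A l) (hA : A.PosSemidef) (k : κ) : 0 ≤ l k := by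
  obtain ⟨_, e, rfl⟩ := h.exists_eq_eigenvalues_comp
  exact hA.eigenvalues_nonneg (e k)

theorem exists_eigenbasis (h : HasSpectrum A l) :
    ∃ b : OrthonormalBasis κ ℂ (EuclideanSpace ℂ ι), IsEigenbasis A l b := by
  obtain ⟨hA, e, rfl⟩ := h.exists_eq_eigenvalues_comp
  refine ⟨hA.eigenvectorBasis.reindex e.symm, fun k ↦ ?_⟩
  simpa only [OrthonormalBasis.reindex_apply, e.symm_symm, Complex.coe_smul, Function.comp_apply]
    using hA.mulVec_eigenvectorBasis (e k)

theorem exists_diagonalization [DecidableEq κ] (h : HasSpectrum A l) :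
    ∃ W : Matrix ι κ ℂ, Wᴴ * W = 1 ∧ W * Wᴴ = 1 ∧ A = W * diagonal (fun k ↦ (l k : ℂ)) * Wᴴ := by
  obtain ⟨b, hb⟩ := h.exists_eigenbasis
  set W := basisMatrix b
  have mul_eigen : A * W = W * diagonal (fun k ↦ (l k : ℂ)) := by
    ext x k
    rw [mul_diagonal, mul_comm]
    exact congrFun (hb k) x
  exact ⟨W, conjTranspose_mul_basisMatrix b, basisMatrix_mul_conjTranspose b, by
    rw [← mul_eigen, Matrix.mul_assoc, basisMatrix_mul_conjTranspose, Matrix.mul_one]⟩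

theorem exists_unitary (hA : HasSpectrum A l) (hB : HasSpectrum B l) :
    ∃ U : Matrix ι ι ℂ, Uᴴ * U = 1 ∧ B = U * A * Uᴴ := by
  classical
  obtain ⟨V, hV, hV', rfl⟩ := hA.exists_diagonalization
  obtain ⟨W, hW, -, rfl⟩ := hB.exists_diagonalization
  set D := diagonal fun k ↦ (l k : ℂ)
  refine ⟨W * Vᴴ, ?_, ?_⟩
  · calc (W * Vᴴ)ᴴ * (W * Vᴴ) = V * (Wᴴ * W) * Vᴴ := by
          simp only [conjTranspose_mul, conjTranspose_conjTranspose, Matrix.mul_assoc]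
      _ = 1 := by rw [hW, Matrix.mul_one, hV']
  · calc W * D * Wᴴ = W * (Vᴴ * V) * D * (Vᴴ * V) * Wᴴ := by
          rw [hV, Matrix.mul_one, Matrix.mul_one]
      _ = W * Vᴴ * (V * D * Vᴴ) * (W * Vᴴ)ᴴ := by
          simp only [conjTranspose_mul, conjTranspose_conjTranspose, Matrix.mul_assoc]

theorem unitary_conj (h : HasSpectrum A l) {U : Matrix ι ι ℂ} (hU : Uᴴ * U = 1) :
    HasSpectrum (U * A * Uᴴ) l := by
  refine ⟨isHermitian_mul_mul_conjTranspose U h.1, ?_⟩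
  rw [Matrix.charpoly_mul_comm, ← Matrix.mul_assoc, hU, Matrix.one_mul, h.2]

theorem submatrix {ι' : Type*} [Fintype ι'] [DecidableEq ι'] (h : HasSpectrum A l) (e : ι' ≃ ι) :
    HasSpectrum (A.submatrix e e) l :=
  ⟨h.1.submatrix e, (charpoly_reindex e.symm A).trans h.2⟩

theorem blockDiagonal {o : Type*} [Fintype o] [DecidableEq o] {M : o → Matrix ι ι ℂ}
    {l : o → κ → ℝ} (h : ∀ i, HasSpectrum (M i) (l i)) :
    HasSpectrum (blockDiagonal M) fun p : o × κ ↦ l p.1 p.2 := by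
  refine ⟨isHermitian_blockDiagonal_iff.mpr fun i ↦ (h i).1, ?_⟩
  have charmatrix_eq : charmatrix (Matrix.blockDiagonal M)
      = Matrix.blockDiagonal fun i ↦ charmatrix (M i) := by
    ext ⟨x, i⟩ ⟨y, j⟩ : 2
    by_cases hij : i = j
    · subst hij
      simp [charmatrix_apply, blockDiagonal_apply, diagonal_apply]
    · simp [blockDiagonal_apply, hij]
  rw [charpoly, charmatrix_eq, det_blockDiagonal, Fintype.prod_prod_type]
  exact Finset.prod_congr rfl fun i _ ↦ (h i).2

theorem congr {κ' : Type*} [Fintype κ'] {l' : κ' → ℝ} (h : HasSpectrum A l)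
    (hl : ∏ k, (X - C (l k : ℂ)) = ∏ k, (X - C (l' k : ℂ))) : HasSpectrum A l' :=
  ⟨h.1, h.2.trans hl⟩

end HasSpectrum

end Spectrum
section Marginals

open scoped Kronecker

variable {m n : Type*} [Fintype m] [Fintype n]

/-- The reduced matrix on the left factor: the right factor is traced out. -/
def partialTraceRight (ρ : Matrix (m × n) (m × n) ℂ) : Matrix m m ℂ :=
  of fun i i' ↦ ∑ j, ρ (i, j) (i', j)

/-- The reduced matrix on the right factor: the left factor is traced out. -/
def partialTraceLeft (ρ : Matrix (m × n) (m × n) ℂ) : Matrix n n ℂ :=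
  of fun j j' ↦ ∑ i, ρ (i, j) (i, j')

theorem trace_partialTraceRight_mul [DecidableEq n] (ρ : Matrix (m × n) (m × n) ℂ)
    (X : Matrix m m ℂ) :
    (partialTraceRight ρ * X).trace = (ρ * (X ⊗ₖ (1 : Matrix n n ℂ))).trace := by
  simp only [trace, diag_apply, mul_apply, partialTraceRight, of_apply, kroneckerMap_apply,
    one_apply, Fintype.sum_prod_type, mul_ite, mul_one, mul_zero, Finset.sum_ite_eq',
    Finset.mem_univ, if_true, Finset.sum_mul]
  exact Finset.sum_congr rfl fun i _ ↦ Finset.sum_comm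

theorem trace_partialTraceLeft_mul [DecidableEq m] (ρ : Matrix (m × n) (m × n) ℂ)
    (Y : Matrix n n ℂ) :
    (partialTraceLeft ρ * Y).trace = (ρ * ((1 : Matrix m m ℂ) ⊗ₖ Y)).trace := by
  simp only [trace, diag_apply, mul_apply, partialTraceLeft, of_apply, kroneckerMap_apply,
    one_apply, Fintype.sum_prod_type_right, ite_mul, one_mul, zero_mul, mul_ite, mul_zero,
    Finset.sum_ite_eq', Finset.mem_univ, if_true, Finset.sum_mul]
  exact Finset.sum_congr rfl fun j _ ↦ Finset.sum_comm

theorem partialTraceRight_kronecker_conj [DecidableEq n] (ρ : Matrix (m × n) (m × n) ℂ)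
    (U : Matrix m m ℂ) {V : Matrix n n ℂ} (hV : Vᴴ * V = 1) :
    partialTraceRight ((U ⊗ₖ V) * ρ * (U ⊗ₖ V)ᴴ) = U * partialTraceRight ρ * Uᴴ := by
  refine ext_iff_trace_mul_right.mpr fun X ↦ ?_
  calc (partialTraceRight ((U ⊗ₖ V) * ρ * (U ⊗ₖ V)ᴴ) * X).trace
      = (ρ * ((U ⊗ₖ V)ᴴ * (X ⊗ₖ (1 : Matrix n n ℂ)) * (U ⊗ₖ V))).trace := by
        rw [trace_partialTraceRight_mul, Matrix.mul_assoc, Matrix.mul_assoc, trace_mul_comm,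
          Matrix.mul_assoc, Matrix.mul_assoc]
    _ = (ρ * ((Uᴴ * X * U) ⊗ₖ (1 : Matrix n n ℂ))).trace := by
        rw [conjTranspose_kronecker, ← mul_kronecker_mul, ← mul_kronecker_mul, Matrix.mul_one, hV]
    _ = (U * partialTraceRight ρ * Uᴴ * X).trace := by
        rw [← trace_partialTraceRight_mul, Matrix.mul_assoc, Matrix.mul_assoc, Matrix.mul_assoc,
          trace_mul_comm U, Matrix.mul_assoc, Matrix.mul_assoc]

theorem partialTraceLeft_kronecker_conj [DecidableEq m] (ρ : Matrix (m × n) (m × n) ℂ)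
    {U : Matrix m m ℂ} (hU : Uᴴ * U = 1) (V : Matrix n n ℂ) :
    partialTraceLeft ((U ⊗ₖ V) * ρ * (U ⊗ₖ V)ᴴ) = V * partialTraceLeft ρ * Vᴴ := by
  refine ext_iff_trace_mul_right.mpr fun Y ↦ ?_
  calc (partialTraceLeft ((U ⊗ₖ V) * ρ * (U ⊗ₖ V)ᴴ) * Y).trace
      = (ρ * ((U ⊗ₖ V)ᴴ * ((1 : Matrix m m ℂ) ⊗ₖ Y) * (U ⊗ₖ V))).trace := by
        rw [trace_partialTraceLeft_mul, Matrix.mul_assoc, Matrix.mul_assoc, trace_mul_comm,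
          Matrix.mul_assoc, Matrix.mul_assoc]
    _ = (ρ * ((1 : Matrix m m ℂ) ⊗ₖ (Vᴴ * Y * V))).trace := by
        rw [conjTranspose_kronecker, ← mul_kronecker_mul, ← mul_kronecker_mul, Matrix.mul_one, hU]
    _ = (V * partialTraceLeft ρ * Vᴴ * Y).trace := by
        rw [← trace_partialTraceLeft_mul, Matrix.mul_assoc, Matrix.mul_assoc, Matrix.mul_assoc,
          trace_mul_comm V, Matrix.mul_assoc, Matrix.mul_assoc]

variable [DecidableEq m] [DecidableEq n] {κ₁ κ₂ κ : Type*} [Fintype κ₁] [Fintype κ₂] [Fintype κ]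
  {l₁ : κ₁ → ℝ} {l₂ : κ₂ → ℝ} {l : κ → ℝ}

variable (m n) in
/-- Some Hermitian matrix on the tensor product of `ℂ^m` and `ℂ^n` has spectrum `l`, and its two
reduced matrices have the spectra `l₁` and `l₂`. -/
def AreMarginalSpectra (l₁ : κ₁ → ℝ) (l₂ : κ₂ → ℝ) (l : κ → ℝ) : Prop :=
  ∃ ρ : Matrix (m × n) (m × n) ℂ, HasSpectrum ρ l ∧
    HasSpectrum (partialTraceRight ρ) l₁ ∧ HasSpectrum (partialTraceLeft ρ) l₂

theorem AreMarginalSpectra.swap (h : AreMarginalSpectra m n l₁ l₂ l) :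
    AreMarginalSpectra n m l₂ l₁ l := by
  obtain ⟨ρ, hρ, h₁, h₂⟩ := h
  exact ⟨ρ.submatrix Prod.swap Prod.swap, hρ.submatrix (Equiv.prodComm n m), h₂, h₁⟩

theorem AreMarginalSpectra.congr {κ' : Type*} [Fintype κ'] {l' : κ' → ℝ}
    (h : AreMarginalSpectra m n l₁ l₂ l)
    (hl : ∏ k, (X - C (l k : ℂ)) = ∏ k, (X - C (l' k : ℂ))) : AreMarginalSpectra m n l₁ l₂ l' :=
  let ⟨ρ, hρ, h₁, h₂⟩ := h
  ⟨ρ, hρ.congr hl, h₁, h₂⟩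

theorem AreMarginalSpectra.exists_partialTrace_eq (h : AreMarginalSpectra m n l₁ l₂ l)
    {ρ₁ : Matrix m m ℂ} {ρ₂ : Matrix n n ℂ}
    (h₁ : HasSpectrum ρ₁ l₁) (h₂ : HasSpectrum ρ₂ l₂) :
    ∃ ρ, HasSpectrum ρ l ∧ partialTraceRight ρ = ρ₁ ∧ partialTraceLeft ρ = ρ₂ := by
  obtain ⟨ρ, hρ, hr, hl⟩ := h
  obtain ⟨U, hU, rfl⟩ := hr.exists_unitary h₁
  obtain ⟨V, hV, rfl⟩ := hl.exists_unitary h₂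
  have hUV : (U ⊗ₖ V)ᴴ * (U ⊗ₖ V) = 1 := by
    rw [conjTranspose_kronecker, ← mul_kronecker_mul, hU, hV, one_kronecker_one]
  exact ⟨_, hρ.unitary_conj hUV, partialTraceRight_kronecker_conj ρ U hV,
    partialTraceLeft_kronecker_conj ρ hU V⟩

end Marginals

section Purification

variable {ι p κ : Type*} [Fintype ι] [Fintype p] [Fintype κ] {l : κ → ℝ}

theorem exists_mul_conjTranspose_eq [DecidableEq ι] [DecidableEq p]
    {ρ : Matrix ι ι ℂ} {σ : Matrix p p ℂ} (hl : 0 ≤ l)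
    (hρ : HasSpectrum ρ l) (hσ : HasSpectrum σ l) :
    ∃ A : Matrix ι p ℂ, A * Aᴴ = ρ ∧ (Aᴴ * A)ᵀ = σ := by
  classical
  obtain ⟨V, hV, -, rfl⟩ := hρ.exists_diagonalization
  obtain ⟨W, hW, -, rfl⟩ := hσ.exists_diagonalization
  set D : Matrix κ κ ℂ := diagonal fun k ↦ (√(l k) : ℂ)
  have hD : Dᴴ = D := by simp [D, diagonal_conjTranspose, Pi.star_def]
  have hDT : Dᵀ = D := by simp [D, diagonal_transpose]
  have hDD : D * D = diagonal fun k ↦ (l k : ℂ) := by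
    rw [diagonal_mul_diagonal]
    exact congrArg diagonal (funext fun k ↦ mod_cast Real.mul_self_sqrt (hl k))
  have hWstar : Wᵀᴴ = Wᴴᵀ := rfl
  have hWT : Wᵀ * Wᴴᵀ = 1 := by rw [← transpose_mul, hW, transpose_one]
  refine ⟨V * D * Wᵀ, ?_, ?_⟩
  · calc V * D * Wᵀ * (V * D * Wᵀ)ᴴ = V * (D * (Wᵀ * Wᴴᵀ) * D) * Vᴴ := by
          simp only [conjTranspose_mul, hD, Matrix.mul_assoc, hWstar]
      _ = _ := by rw [hWT, Matrix.mul_one, hDD]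
  · calc ((V * D * Wᵀ)ᴴ * (V * D * Wᵀ))ᵀ = W * (D * (Vᴴ * V)ᵀ * D) * Wᴴ := by
          simp only [conjTranspose_mul, transpose_mul, hD, hDT, Matrix.mul_assoc,
            transpose_transpose, hWstar]
      _ = _ := by rw [hV, transpose_one, Matrix.mul_one, hDD]

theorem HasSpectrum.mul_conjTranspose_self [DecidableEq ι] [DecidableEq p]
    {A : Matrix ι p ℂ} (hcard : Fintype.card ι = Fintype.card p) (h : HasSpectrum (Aᴴ * A)ᵀ l) :
    HasSpectrum (A * Aᴴ) l := by
  refine ⟨isHermitian_mul_conjTranspose_self A, ?_⟩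
  have comm := charpoly_mul_comm' A Aᴴ
  rw [hcard] at comm
  rw [mul_left_cancel₀ (pow_ne_zero _ X_ne_zero) comm, ← charpoly_transpose, h.2]

variable {m n : Type*} [Fintype m] [Fintype n]

/-- `ρ₁`, `ρ₂`, `ρ₃` are the reduced matrices of the (not necessarily normalised) tensor `Ψ`. -/
def HasMarginals (Ψ : m → n → p → ℂ) (ρ₁ : Matrix m m ℂ) (ρ₂ : Matrix n n ℂ)
    (ρ₃ : Matrix p p ℂ) : Prop :=
  (∀ i i', ρ₁ i i' = ∑ j, ∑ k, Ψ i j k * starRingEnd ℂ (Ψ i' j k)) ∧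
  (∀ j j', ρ₂ j j' = ∑ i, ∑ k, Ψ i j k * starRingEnd ℂ (Ψ i j' k)) ∧
  ∀ k k', ρ₃ k k' = ∑ i, ∑ j, Ψ i j k * starRingEnd ℂ (Ψ i j k')

variable {ρ₁ : Matrix m m ℂ} {ρ₂ : Matrix n n ℂ} {ρ₃ : Matrix p p ℂ}

theorem hasMarginals_iff {Ψ : m → n → p → ℂ} {A : Matrix (m × n) p ℂ}
    (hA : ∀ i j k, A (i, j) k = Ψ i j k) :
    HasMarginals Ψ ρ₁ ρ₂ ρ₃ ↔
      ρ₁ = partialTraceRight (A * Aᴴ) ∧ ρ₂ = partialTraceLeft (A * Aᴴ) ∧ ρ₃ = (Aᴴ * A)ᵀ := by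
  simp only [HasMarginals, ← ext_iff, partialTraceRight, partialTraceLeft, of_apply, mul_apply,
    conjTranspose_apply, transpose_apply, Fintype.sum_prod_type, hA, starRingEnd_apply,
    mul_comm (star _)]

theorem HasMarginals.sum_normSq {Ψ : m → n → p → ℂ} (h : HasMarginals Ψ ρ₁ ρ₂ ρ₃) :
    ((∑ i, ∑ j, ∑ k, Complex.normSq (Ψ i j k) : ℝ) : ℂ) = ρ₁.trace := by
  simp only [trace, diag_apply, h.1, Complex.mul_conj, Complex.ofReal_sum]

theorem exists_hasMarginals_iff [DecidableEq m] [DecidableEq n] [DecidableEq p]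
    {κ₁ κ₂ : Type*} [Fintype κ₁] [Fintype κ₂]
    {l₁ : κ₁ → ℝ} {l₂ : κ₂ → ℝ} (hcard : Fintype.card (m × n) = Fintype.card p) (hl : 0 ≤ l)
    (h₁ : HasSpectrum ρ₁ l₁) (h₂ : HasSpectrum ρ₂ l₂) (h₃ : HasSpectrum ρ₃ l) :
    (∃ Ψ, HasMarginals Ψ ρ₁ ρ₂ ρ₃) ↔ AreMarginalSpectra m n l₁ l₂ l := by
  constructor
  · rintro ⟨Ψ, hΨ⟩
    let A : Matrix (m × n) p ℂ := of fun x k ↦ Ψ x.1 x.2 k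
    obtain ⟨rfl, rfl, rfl⟩ := (hasMarginals_iff (A := A) fun _ _ _ ↦ rfl).mp hΨ
    exact ⟨A * Aᴴ, h₃.mul_conjTranspose_self hcard, h₁, h₂⟩
  · intro h
    obtain ⟨ρ, hρ, rfl, rfl⟩ := h.exists_partialTrace_eq h₁ h₂
    obtain ⟨A, rfl, rfl⟩ := exists_mul_conjTranspose_eq hl hρ h₃
    exact ⟨fun i j k ↦ A (i, j) k, (hasMarginals_iff fun _ _ _ ↦ rfl).mpr ⟨rfl, rfl, rfl⟩⟩

end Purification

section Expectation

variable {ι κ : Type*} [Fintype ι] [Fintype κ] {A : Matrix ι ι ℂ} {l : κ → ℝ}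

/-- The expectation `⟨x, A x⟩` of the observable `A` in the (not necessarily normalised) state `x`;
it is real when `A` is Hermitian. -/
noncomputable def expectation (A : Matrix ι ι ℂ) (x : EuclideanSpace ℂ ι) : ℝ :=
  (star x.ofLp ⬝ᵥ A *ᵥ x.ofLp).re

theorem expectation_eq_trace (A : Matrix ι ι ℂ) (x : EuclideanSpace ℂ ι) :
    expectation A x = (A * vecMulVec x.ofLp (star x.ofLp)).trace.re := by
  rw [expectation, mul_vecMulVec, trace_vecMulVec, dotProduct_comm]

namespace IsEigenbasis

variable {b : OrthonormalBasis κ ℂ (EuclideanSpace ℂ ι)}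

theorem expectation_eq_sum (hb : IsEigenbasis A l b) (x : EuclideanSpace ℂ ι) :
    expectation A x = ∑ k, l k * ‖inner ℂ (b k) x‖ ^ 2 := by
  classical
  have mul_eigen k : A * vecMulVec (b k).ofLp (star (b k).ofLp)
      = (l k : ℂ) • vecMulVec (b k).ofLp (star (b k).ofLp) := by
    rw [mul_vecMulVec, hb k, smul_vecMulVec]
  have overlap k : star x.ofLp ⬝ᵥ (b k).ofLp * star (b k).ofLp ⬝ᵥ x.ofLp
      = ((‖inner ℂ (b k) x‖ ^ 2 : ℝ) : ℂ) := by
    rw [dotProduct_comm, dotProduct_comm _ x.ofLp, ← EuclideanSpace.inner_eq_star_dotProduct,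
      ← EuclideanSpace.inner_eq_star_dotProduct, ← inner_conj_symm, mul_comm, Complex.mul_conj,
      Complex.normSq_eq_norm_sq]
  have spectral : A = ∑ k, (l k : ℂ) • vecMulVec (b k).ofLp (star (b k).ofLp) := by
    rw [← Matrix.mul_one A, ← sum_vecMulVec_orthonormalBasis b, Matrix.mul_sum]
    exact Finset.sum_congr rfl fun k _ ↦ mul_eigen k
  rw [expectation, spectral, Matrix.sum_mulVec, dotProduct_sum, Complex.re_sum]
  refine Finset.sum_congr rfl fun k _ ↦ ?_
  rw [smul_mulVec, dotProduct_smul, smul_eq_mul, Complex.re_ofReal_mul, vecMulVec_mulVec,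
    dotProduct_smul, op_smul_eq_mul, overlap, Complex.ofReal_re]

theorem expectation_apply (hb : IsEigenbasis A l b) (k : κ) : expectation A (b k) = l k := by
  classical
  simp [hb.expectation_eq_sum, b.inner_eq_ite, apply_ite]

theorem le_expectation (hb : IsEigenbasis A l b) {x : EuclideanSpace ℂ ι} (hx : ‖x‖ = 1) {c : ℝ}
    (hc : ∀ k, inner ℂ (b k) x ≠ 0 → c ≤ l k) : c ≤ expectation A x := by
  have weights : ∑ k, ‖inner ℂ (b k) x‖ ^ 2 = 1 := by rw [b.sum_sq_norm_inner_right, hx, one_pow]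
  rw [hb.expectation_eq_sum, ← mul_one c, ← weights, Finset.mul_sum]
  refine Finset.sum_le_sum fun k _ ↦ ?_
  by_cases hk : inner ℂ (b k) x = 0
  · simp [hk]
  · exact mul_le_mul_of_nonneg_right (hc k hk) (sq_nonneg _)

theorem expectation_le (hb : IsEigenbasis A l b) {x : EuclideanSpace ℂ ι} (hx : ‖x‖ = 1) {c : ℝ}
    (hc : ∀ k, inner ℂ (b k) x ≠ 0 → l k ≤ c) : expectation A x ≤ c := by
  have weights : ∑ k, ‖inner ℂ (b k) x‖ ^ 2 = 1 := by rw [b.sum_sq_norm_inner_right, hx, one_pow]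
  rw [hb.expectation_eq_sum, ← mul_one c, ← weights, Finset.mul_sum]
  refine Finset.sum_le_sum fun k _ ↦ ?_
  by_cases hk : inner ℂ (b k) x = 0
  · simp [hk]
  · exact mul_le_mul_of_nonneg_right (hc k hk) (sq_nonneg _)

-- Ky Fan's minimum principle.
theorem sum_le_sum_expectation {τ : Type*} [Fintype τ] (hb : IsEigenbasis A l b)
    {x : τ → EuclideanSpace ℂ ι} (hx : Orthonormal ℂ x) {s : Finset κ}
    (hs : s.card = Fintype.card τ) {c : ℝ} (hlow : ∀ k ∈ s, l k ≤ c) (hhigh : ∀ k ∉ s, c ≤ l k) :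
    ∑ k ∈ s, l k ≤ ∑ t, expectation A (x t) := by
  classical
  set weight : κ → ℝ := fun k ↦ ∑ t, ‖inner ℂ (b k) (x t)‖ ^ 2
  have weight_nonneg k : 0 ≤ weight k := Finset.sum_nonneg fun t _ ↦ sq_nonneg _
  have weight_le_one k : weight k ≤ 1 := by
    simpa only [weight, norm_inner_symm (b k), b.norm_eq_one, one_pow]
      using hx.sum_inner_products_le (b k) (s := Finset.univ)
  have sum_weight : ∑ k, weight k = s.card := by
    rw [Finset.sum_comm]
    simp only [b.sum_sq_norm_inner_right, hx.1, one_pow, Finset.sum_const, Finset.card_univ,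
      nsmul_eq_mul, mul_one, hs]
  have bathtub k : (if k ∈ s then l k - c else 0) ≤ (l k - c) * weight k := by
    split_ifs with hk
    · nlinarith [hlow k hk, weight_le_one k]
    · exact mul_nonneg (sub_nonneg.mpr (hhigh k hk)) (weight_nonneg k)
  have sum_expectation : ∑ t, expectation A (x t) = ∑ k, l k * weight k := by
    simp only [hb.expectation_eq_sum, weight, Finset.mul_sum]
    exact Finset.sum_comm
  have key := Finset.sum_le_sum fun k (_ : k ∈ Finset.univ) ↦ bathtub k
  simp only [sub_mul, Finset.sum_sub_distrib, ← Finset.mul_sum, sum_weight, Finset.sum_ite_mem,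
    Finset.univ_inter, Finset.sum_const, nsmul_eq_mul] at key
  linarith

end IsEigenbasis

end Expectation

section ProductVector

variable {m n : Type*}

/-- The product vector `x ⊗ y`. -/
noncomputable def prodVec (x : EuclideanSpace ℂ m) (y : EuclideanSpace ℂ n) :
    EuclideanSpace ℂ (m × n) :=
  WithLp.toLp 2 fun p ↦ x p.1 * y p.2

theorem prodVec_add (x x' : EuclideanSpace ℂ m) (y : EuclideanSpace ℂ n) :
    prodVec (x + x') y = prodVec x y + prodVec x' y := by
  ext p
  simp only [prodVec, PiLp.add_apply, add_mul]

theorem prodVec_smul (c : ℂ) (x : EuclideanSpace ℂ m) (y : EuclideanSpace ℂ n) :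
    prodVec (c • x) y = c • prodVec x y := by
  ext p
  simp only [prodVec, PiLp.smul_apply, smul_eq_mul, mul_assoc]

theorem vecMulVec_prodVec (x : EuclideanSpace ℂ m) (y : EuclideanSpace ℂ n) :
    vecMulVec (prodVec x y).ofLp (star (prodVec x y).ofLp)
      = kroneckerMap (· * ·) (vecMulVec x.ofLp (star x.ofLp)) (vecMulVec y.ofLp (star y.ofLp)) := by
  ext p q
  simp only [prodVec, vecMulVec_apply, Pi.star_apply, star_mul', kroneckerMap_apply]
  ring

variable [Fintype m] [Fintype n]

theorem inner_prodVec (x x' : EuclideanSpace ℂ m) (y y' : EuclideanSpace ℂ n) :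
    inner ℂ (prodVec x y) (prodVec x' y') = inner ℂ x x' * inner ℂ y y' := by
  simp only [PiLp.inner_apply, prodVec, Fintype.sum_prod_type, Finset.sum_mul_sum]
  refine Finset.sum_congr rfl fun i _ ↦ Finset.sum_congr rfl fun j _ ↦ ?_
  simp only [RCLike.inner_apply, map_mul]
  ring

theorem norm_prodVec (x : EuclideanSpace ℂ m) (y : EuclideanSpace ℂ n) :
    ‖prodVec x y‖ = ‖x‖ * ‖y‖ := by
  have sq_eq : ‖prodVec x y‖ ^ 2 = (‖x‖ * ‖y‖) ^ 2 := by
    simp only [mul_pow, EuclideanSpace.norm_sq_eq, prodVec, norm_mul, Fintype.sum_prod_type,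
      Finset.sum_mul_sum]
  exact (sq_eq_sq₀ (norm_nonneg _) (by positivity)).mp sq_eq

theorem expectation_partialTraceRight {κ : Type*} [Fintype κ] (ρ : Matrix (m × n) (m × n) ℂ)
    (x : EuclideanSpace ℂ m) (b : OrthonormalBasis κ ℂ (EuclideanSpace ℂ n)) :
    expectation (partialTraceRight ρ) x = ∑ k, expectation ρ (prodVec x (b k)) := by
  classical
  simp only [expectation_eq_trace, trace_partialTraceRight_mul, vecMulVec_prodVec,
    ← sum_vecMulVec_orthonormalBasis b]
  rw [← Complex.re_sum, ← trace_sum, ← Matrix.mul_sum]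
  exact congrArg (fun K ↦ (ρ * K).trace.re) (map_sum (kroneckerBilinear (R := ℂ) _) _ _)

theorem expectation_partialTraceLeft {κ : Type*} [Fintype κ] (ρ : Matrix (m × n) (m × n) ℂ)
    (b : OrthonormalBasis κ ℂ (EuclideanSpace ℂ m)) (y : EuclideanSpace ℂ n) :
    expectation (partialTraceLeft ρ) y = ∑ k, expectation ρ (prodVec (b k) y) := by
  classical
  simp only [expectation_eq_trace, trace_partialTraceLeft_mul, vecMulVec_prodVec,
    ← sum_vecMulVec_orthonormalBasis b]
  rw [← Complex.re_sum, ← trace_sum, ← Matrix.mul_sum]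
  exact congrArg (fun K ↦ (ρ * K).trace.re) (LinearMap.map_sum₂ (kroneckerBilinear (R := ℂ)) _ _ _)

theorem exists_orthonormalBasis_apply_eq_zero {E : Type*} [NormedAddCommGroup E]
    [InnerProductSpace ℂ E] [FiniteDimensional ℂ E] {κ : Type*} [Fintype κ] [Nontrivial κ]
    (hcard : Module.finrank ℂ E = Fintype.card κ) (f : E →ₗ[ℂ] ℂ) (k : κ) :
    ∃ b : OrthonormalBasis κ ℂ E, f (b k) = 0 := by
  have ker_ne_bot : LinearMap.ker f ≠ ⊥ := LinearMap.ker_ne_bot_of_finrank_lt <| by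
    rw [Module.finrank_self, hcard]
    exact Fintype.one_lt_card
  obtain ⟨x, hx, hx0⟩ := Submodule.exists_mem_ne_zero_of_ne_bot ker_ne_bot
  let e : E := ((‖x‖ : ℂ)⁻¹) • x
  have orthonormal_e : Orthonormal ℂ (Set.domRestrict {k} fun _ : κ ↦ e) :=
    ⟨fun _ ↦ norm_smul_inv_norm hx0,
      fun _ _ hij ↦ (hij (Subsingleton.elim _ _)).elim⟩
  obtain ⟨b, hb⟩ := orthonormal_e.exists_orthonormalBasis_extension_of_card_eq hcard
  exact ⟨b, by rw [hb k rfl, map_smul, LinearMap.mem_ker.mp hx, smul_zero]⟩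

theorem exists_orthonormalBasis_inner_prodVec_eq_zero [Nontrivial m] (i : m)
    (z : EuclideanSpace ℂ (m × n)) (y : EuclideanSpace ℂ n) :
    ∃ b : OrthonormalBasis m ℂ (EuclideanSpace ℂ m), inner ℂ z (prodVec (b i) y) = 0 :=
  let f : EuclideanSpace ℂ m →ₗ[ℂ] ℂ :=
    { toFun := fun x ↦ inner ℂ z (prodVec x y)
      map_add' := fun x x' ↦ by simp only [prodVec_add, inner_add_right]
      map_smul' := fun c x ↦ by simp only [prodVec_smul, inner_smul_right]; rfl }
  exists_orthonormalBasis_apply_eq_zero (by simp) f i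

end ProductVector

section Necessity

variable {m n κ₁ κ₂ κ : Type*} [Fintype m] [DecidableEq m] [Fintype n] [DecidableEq n] [Fintype κ₁]
  [Fintype κ₂] [Fintype κ]

namespace AreMarginalSpectra

theorem sum_left {l₁ : κ₁ → ℝ} {l₂ : κ₂ → ℝ} {l : κ → ℝ} (h : AreMarginalSpectra m n l₁ l₂ l) :
    ∑ k, l₁ k = ∑ k, l k := by
  obtain ⟨ρ, hρ, h₁, -⟩ := h
  have trace_eq : (partialTraceRight ρ).trace = ρ.trace := by
    simpa only [one_kronecker_one, Matrix.mul_one] using trace_partialTraceRight_mul ρ 1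
  rw [h₁.trace_eq, hρ.trace_eq] at trace_eq
  exact mod_cast trace_eq

theorem sum_le_left {l₁ : κ₁ → ℝ} {l₂ : κ₂ → ℝ} {l : κ → ℝ} (h : AreMarginalSpectra m n l₁ l₂ l)
    (i : κ₁) {s : Finset κ} (hs : s.card = Fintype.card n) {c : ℝ} (hlow : ∀ k ∈ s, l k ≤ c)
    (hhigh : ∀ k ∉ s, c ≤ l k) : ∑ k ∈ s, l k ≤ l₁ i := by
  obtain ⟨ρ, hρ, h₁, -⟩ := h
  obtain ⟨u, hu⟩ := h₁.exists_eigenbasis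
  obtain ⟨w, hw⟩ := hρ.exists_eigenbasis
  let v := EuclideanSpace.basisFun n ℂ
  have orthonormal : Orthonormal ℂ fun j ↦ prodVec (u i) (v j) :=
    orthonormal_iff_ite.mpr fun j j' ↦ by
      rw [inner_prodVec, u.inner_eq_one, one_mul, v.inner_eq_ite]
  rw [← hu.expectation_apply i, expectation_partialTraceRight ρ (u i) v]
  exact hw.sum_le_sum_expectation orthonormal hs hlow hhigh

variable {l₁ l₂ : Fin 2 → ℝ} {l : Fin 4 → ℝ}

theorem add_le_add_of_monotone (h : AreMarginalSpectra (Fin 2) (Fin 2) l₁ l₂ l) (hl : Monotone l) :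
    2 * l 0 + l 1 + l 2 ≤ l₁ 0 + l₂ 0 := by
  have sum_eq := h.sum_left
  obtain ⟨ρ, hρ, h₁, h₂⟩ := h
  obtain ⟨u, hu⟩ := h₁.exists_eigenbasis
  obtain ⟨v, hv⟩ := h₂.exists_eigenbasis
  obtain ⟨w, hw⟩ := hρ.exists_eigenbasis
  have left i :
      l₁ i = expectation ρ (prodVec (u i) (v 0)) + expectation ρ (prodVec (u i) (v 1)) := by
    rw [← hu.expectation_apply, expectation_partialTraceRight ρ _ v, Fin.sum_univ_two]
  have right j :
      l₂ j = expectation ρ (prodVec (u 0) (v j)) + expectation ρ (prodVec (u 1) (v j)) := by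
    rw [← hv.expectation_apply, expectation_partialTraceLeft ρ u, Fin.sum_univ_two]
  have norm_eq_one i j : ‖prodVec (u i) (v j)‖ = 1 := by
    rw [norm_prodVec, u.norm_eq_one, v.norm_eq_one, one_mul]
  have lower : l 0 ≤ expectation ρ (prodVec (u 0) (v 0)) :=
    hw.le_expectation (norm_eq_one 0 0) fun k _ ↦ hl (Fin.zero_le k)
  have upper : expectation ρ (prodVec (u 1) (v 1)) ≤ l 3 :=
    hw.expectation_le (norm_eq_one 1 1) fun k _ ↦ hl (Fin.le_last k)
  rw [Fin.sum_univ_two, Fin.sum_univ_four] at sum_eq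
  linarith [left 0, left 1, right 0]

end AreMarginalSpectra

theorem sub_le_expectation_sub {l₁ l₂ : Fin 2 → ℝ} {ρ : Matrix (Fin 2 × Fin 2) (Fin 2 × Fin 2) ℂ}
    {u v : OrthonormalBasis (Fin 2) ℂ (EuclideanSpace ℂ (Fin 2))}
    (hu : IsEigenbasis (partialTraceRight ρ) l₁ u) (hv : IsEigenbasis (partialTraceLeft ρ) l₂ v)
    (hl₁ : l₁ 0 ≤ l₁ 1) (x : OrthonormalBasis (Fin 2) ℂ (EuclideanSpace ℂ (Fin 2))) :
    l₁ 0 - l₂ 0 ≤ expectation ρ (prodVec (x 0) (v 1)) - expectation ρ (prodVec (x 1) (v 0)) := by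
  have left : l₁ 0 ≤ expectation (partialTraceRight ρ) (x 0) :=
    hu.le_expectation (x.norm_eq_one 0) fun k _ ↦ by fin_cases k <;> simp [hl₁]
  have right : expectation (partialTraceLeft ρ) (v 0) = l₂ 0 := hv.expectation_apply 0
  rw [expectation_partialTraceRight ρ _ v, Fin.sum_univ_two] at left
  rw [expectation_partialTraceLeft ρ x, Fin.sum_univ_two] at right
  linarith

theorem AreMarginalSpectra.sub_le_min {l₁ l₂ : Fin 2 → ℝ} {l : Fin 4 → ℝ}
    (h : AreMarginalSpectra (Fin 2) (Fin 2) l₁ l₂ l) (hl : Monotone l) (hl₁ : l₁ 0 ≤ l₁ 1) :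
    l₁ 0 - l₂ 0 ≤ min (l 2 - l 0) (l 3 - l 1) := by
  obtain ⟨ρ, hρ, h₁, h₂⟩ := h
  obtain ⟨u, hu⟩ := h₁.exists_eigenbasis
  obtain ⟨v, hv⟩ := h₂.exists_eigenbasis
  obtain ⟨w, hw⟩ := hρ.exists_eigenbasis
  have norm_eq_one (x : OrthonormalBasis (Fin 2) ℂ (EuclideanSpace ℂ (Fin 2))) i j :
      ‖prodVec (x i) (v j)‖ = 1 := by
    rw [norm_prodVec, x.norm_eq_one, v.norm_eq_one, one_mul]
  refine le_min ?_ ?_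
  · obtain ⟨x, hx⟩ := exists_orthonormalBasis_inner_prodVec_eq_zero (0 : Fin 2) (w 3) (v 1)
    have upper : expectation ρ (prodVec (x 0) (v 1)) ≤ l 2 :=
      hw.expectation_le (norm_eq_one x 0 1) fun k hk ↦ hl <| by
        have : k ≠ 3 := fun hk3 ↦ hk (hk3 ▸ hx)
        omega
    have lower : l 0 ≤ expectation ρ (prodVec (x 1) (v 0)) :=
      hw.le_expectation (norm_eq_one x 1 0) fun k _ ↦ hl (Fin.zero_le k)
    linarith [sub_le_expectation_sub hu hv hl₁ x]
  · obtain ⟨x, hx⟩ := exists_orthonormalBasis_inner_prodVec_eq_zero (1 : Fin 2) (w 0) (v 0)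
    have upper : expectation ρ (prodVec (x 0) (v 1)) ≤ l 3 :=
      hw.expectation_le (norm_eq_one x 0 1) fun k _ ↦ hl (Fin.le_last k)
    have lower : l 1 ≤ expectation ρ (prodVec (x 1) (v 0)) :=
      hw.le_expectation (norm_eq_one x 1 0) fun k hk ↦ hl <|
        Fin.one_le_of_ne_zero fun hk0 ↦ hk (hk0 ▸ hx)
    linarith [sub_le_expectation_sub hu hv hl₁ x]

end Necessity

section Qubit

/-- The Hermitian matrix with trace `t` and Bloch vector `(x, 0, w)`. -/
noncomputable def qubit (t w x : ℝ) : Matrix (Fin 2) (Fin 2) ℂ :=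
  !![((t + w) / 2 : ℝ), (x / 2 : ℝ); (x / 2 : ℝ), ((t - w) / 2 : ℝ)]

theorem hasSpectrum_qubit {e f w x : ℝ} (h : w ^ 2 + x ^ 2 = (e - f) ^ 2) :
    HasSpectrum (qubit (e + f) w x) ![e, f] := by
  have det_eq : (qubit (e + f) w x).det = (e : ℂ) * f := by
    rw [qubit, det_fin_two_of]
    norm_cast
    linarith
  have trace_eq : (qubit (e + f) w x).trace = (e : ℂ) + f := by
    rw [qubit, trace_fin_two_of]
    norm_cast
    ring
  refine ⟨?_, ?_⟩
  · ext i j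
    fin_cases i <;> fin_cases j <;> simp [qubit]
  · rw [charpoly_fin_two, trace_eq, det_eq]
    simp only [Fin.prod_univ_two, cons_val_zero, cons_val_one, C_add, C_mul]
    ring

theorem hasSpectrum_qubit_one {a w x : ℝ} (h : w ^ 2 + x ^ 2 = (1 - 2 * a) ^ 2) :
    HasSpectrum (qubit 1 w x) ![a, 1 - a] := by
  have spectrum := hasSpectrum_qubit (e := a) (f := 1 - a) (w := w) (x := x) (by rw [h]; ring)
  rwa [add_sub_cancel] at spectrum

/-- The two-qubit matrix with the block `M 0` on the span of `|00⟩, |11⟩` and the block `M 1` on the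
span of `|01⟩, |10⟩`; in each block the first basis vector is the one with the first qubit `0`. -/
def parityBlock (M : Fin 2 → Matrix (Fin 2) (Fin 2) ℂ) :
    Matrix (Fin 2 × Fin 2) (Fin 2 × Fin 2) ℂ :=
  let e : Fin 2 × Fin 2 ≃ Fin 2 × Fin 2 := Equiv.prodShear (Equiv.refl _) Equiv.addLeft
  (blockDiagonal M).submatrix e e

theorem parityBlock_apply (M : Fin 2 → Matrix (Fin 2) (Fin 2) ℂ) (i j i' j' : Fin 2) :
    parityBlock M (i, j) (i', j') = if i + j = i' + j' then M (i + j) i i' else 0 :=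
  rfl

theorem hasSpectrum_parityBlock {κ : Type*} [Fintype κ] {M : Fin 2 → Matrix (Fin 2) (Fin 2) ℂ}
    {l : Fin 2 → κ → ℝ} (h : ∀ i, HasSpectrum (M i) (l i)) :
    HasSpectrum (parityBlock M) fun p : Fin 2 × κ ↦ l p.1 p.2 :=
  (HasSpectrum.blockDiagonal h).submatrix _

theorem partialTraceRight_parityBlock_qubit (t w x t' w' x' : ℝ) :
    partialTraceRight (parityBlock ![qubit t w x, qubit t' w' x']) = qubit (t + t') (w + w') 0 := by
  ext i i'
  fin_cases i <;> fin_cases i' <;>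
    simp [partialTraceRight, parityBlock_apply, qubit] <;> ring

theorem partialTraceLeft_parityBlock_qubit (t w x t' w' x' : ℝ) :
    partialTraceLeft (parityBlock ![qubit t w x, qubit t' w' x']) = qubit (t + t') (w - w') 0 := by
  ext i i'
  fin_cases i <;> fin_cases i' <;>
    simp [partialTraceLeft, parityBlock_apply, qubit] <;> ring

/-- The rotation by the angle with cosine `c` and sine `s` on the span of `|01⟩, |10⟩`. -/
def oddRotation (c s : ℝ) : Matrix (Fin 2 × Fin 2) (Fin 2 × Fin 2) ℂ :=
  parityBlock ![1, !![(c : ℂ), -s; s, c]]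

theorem conjTranspose_oddRotation_mul {c s : ℝ} (h : c ^ 2 + s ^ 2 = 1) :
    (oddRotation c s)ᴴ * oddRotation c s = 1 := by
  have h' : (c : ℂ) ^ 2 + (s : ℂ) ^ 2 = 1 := mod_cast h
  ext ⟨i, j⟩ ⟨i', j'⟩
  fin_cases i <;> fin_cases j <;> fin_cases i' <;> fin_cases j' <;>
    simp [oddRotation, mul_apply, Fintype.sum_prod_type, parityBlock_apply] <;> grind

theorem partialTraceRight_oddRotation_conj {c s : ℝ} (h : c ^ 2 + s ^ 2 = 1) (t w t' z x : ℝ) :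
    partialTraceRight (oddRotation c s * blockDiagonal ![qubit t w x, qubit t' z (-x)]
      * (oddRotation c s)ᴴ) = qubit (t + t') (c ^ 2 * (w + z) + s ^ 2 * (t - t')) 0 := by
  have h' : (c : ℂ) ^ 2 + (s : ℂ) ^ 2 = 1 := mod_cast h
  ext i i'
  fin_cases i <;> fin_cases i' <;>
    simp [partialTraceRight, oddRotation, mul_apply, Fintype.sum_prod_type, parityBlock_apply,
      blockDiagonal_apply, qubit] <;> grind

theorem partialTraceLeft_oddRotation_conj {c s : ℝ} (h : c ^ 2 + s ^ 2 = 1) (t w t' z x : ℝ) :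
    partialTraceLeft (oddRotation c s * blockDiagonal ![qubit t w x, qubit t' z (-x)]
      * (oddRotation c s)ᴴ)
      = qubit (t + t') (s ^ 2 * (w + z) + c ^ 2 * (t - t')) (-(2 * s * x)) := by
  have h' : (c : ℂ) ^ 2 + (s : ℂ) ^ 2 = 1 := mod_cast h
  ext i i'
  fin_cases i <;> fin_cases i' <;>
    simp [partialTraceLeft, oddRotation, mul_apply, Fintype.sum_prod_type, parityBlock_apply,
      blockDiagonal_apply, qubit] <;> grind

end Qubit

section Sufficiency

theorem areMarginalSpectra_of_abs_le {a b x y z w : ℝ} (hsum : x + y + z + w = 1)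
    (heven : |1 - a - b| ≤ x - y) (hodd : |a - b| ≤ z - w) :
    AreMarginalSpectra (Fin 2) (Fin 2) ![a, 1 - a] ![b, 1 - b] ![x, y, z, w] := by
  have exists_coherence {d e : ℝ} (h : |d| ≤ e) : ∃ f, d ^ 2 + f ^ 2 = e ^ 2 :=
    ⟨√(e ^ 2 - d ^ 2), by
      rw [Real.sq_sqrt (sub_nonneg.mpr (sq_le_sq' (abs_le.mp h).1 (abs_le.mp h).2)),
        add_sub_cancel]⟩
  obtain ⟨f, hf⟩ := exists_coherence heven
  obtain ⟨f', hf'⟩ := exists_coherence ((abs_sub_comm b a).trans_le hodd)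
  have spectrum := hasSpectrum_parityBlock
    (M := ![qubit (x + y) (1 - a - b) f, qubit (z + w) (b - a) f']) (l := ![![x, y], ![z, w]])
    (Fin.forall_fin_two.mpr ⟨hasSpectrum_qubit hf, hasSpectrum_qubit hf'⟩)
  refine ⟨_, spectrum.congr ?_, ?_, ?_⟩
  · simp [Fintype.prod_prod_type, Fin.prod_univ_four, mul_assoc]
  · rw [partialTraceRight_parityBlock_qubit, ← add_assoc, hsum]
    exact hasSpectrum_qubit_one (by ring)
  · rw [partialTraceLeft_parityBlock_qubit, ← add_assoc, hsum]
    exact hasSpectrum_qubit_one (by ring)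

theorem areMarginalSpectra_of_rotation {a b x y z w e f g σ : ℝ} (hsum : x + y + z + w = 1)
    (he : e ^ 2 + g ^ 2 = (x - y) ^ 2) (hf : f ^ 2 + g ^ 2 = (z - w) ^ 2) (hσ₀ : 0 ≤ σ)
    (hσ₁ : σ ≤ 1) (ha : (1 - σ) * (e + f) + σ * (x + y - (z + w)) = 1 - 2 * a)
    (hb : (σ * (e + f) + (1 - σ) * (x + y - (z + w))) ^ 2 + 4 * g ^ 2 * σ = (1 - 2 * b) ^ 2) :
    AreMarginalSpectra (Fin 2) (Fin 2) ![a, 1 - a] ![b, 1 - b] ![x, y, z, w] := by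
  have cos_sq : √(1 - σ) ^ 2 = 1 - σ := Real.sq_sqrt (sub_nonneg.mpr hσ₁)
  have sin_sq : √σ ^ 2 = σ := Real.sq_sqrt hσ₀
  have cos_sq_add_sin_sq : √(1 - σ) ^ 2 + √σ ^ 2 = 1 := by rw [cos_sq, sin_sq, sub_add_cancel]
  have spectrum := HasSpectrum.blockDiagonal
    (M := ![qubit (x + y) e g, qubit (z + w) f (-g)]) (l := ![![x, y], ![z, w]])
    (Fin.forall_fin_two.mpr ⟨hasSpectrum_qubit he, hasSpectrum_qubit (by rwa [neg_sq])⟩)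
  have rotated := spectrum.unitary_conj (conjTranspose_oddRotation_mul cos_sq_add_sin_sq)
  refine ⟨_, rotated.congr ?_, ?_, ?_⟩
  · simp [Fintype.prod_prod_type, Fin.prod_univ_four, mul_assoc]
  · rw [partialTraceRight_oddRotation_conj cos_sq_add_sin_sq, ← add_assoc, hsum, cos_sq, sin_sq, ha]
    exact hasSpectrum_qubit_one (by ring)
  · rw [partialTraceLeft_oddRotation_conj cos_sq_add_sin_sq, ← add_assoc, hsum, cos_sq, sin_sq]
    exact hasSpectrum_qubit_one (by rw [← hb, neg_sq, mul_pow, mul_pow, sin_sq]; ring)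

-- The `β ^ 2 - z ^ 2` term vanishes at both ends of the interval, so the intermediate value theorem
-- applies once the quotient is extended continuously by `0` to the region where `R < f z`.
theorem exists_mem_Icc_sq_add_eq {f : ℝ → ℝ} (hf : Continuous f) {β M R S : ℝ} (hβ : 0 ≤ β)
    (hRM : R < M) (hSM : S ≤ M) (hnonneg : 0 ≤ M + f (-β) - R) (hleft : M + f (-β) - R ≤ S)
    (hright : R ≤ f β) :
    ∃ z ∈ Set.Icc (-β) β, f z ≤ R ∧
      (M + f z - R) ^ 2 + 4 * (β ^ 2 - z ^ 2) * ((R - f z) / (M - f z)) = S ^ 2 := by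
  let σ z := (R - min (f z) R) / (M - min (f z) R)
  have denom_pos z : 0 < M - min (f z) R := by linarith [min_le_right (f z) R]
  have σ_nonneg z : 0 ≤ σ z := div_nonneg (sub_nonneg.mpr (min_le_right _ _)) (denom_pos z).le
  let g z := (M + f z - R) ^ 2 + 4 * (β ^ 2 - z ^ 2) * σ z
  have continuous_g : Continuous g := by
    have continuous_σ : Continuous σ := by
      refine Continuous.div ?_ ?_ fun z ↦ (denom_pos z).ne' <;> fun_prop
    fun_prop
  have g_neg_le : g (-β) ≤ S ^ 2 := by
    simp only [g, neg_sq, sub_self, mul_zero, zero_mul, add_zero]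
    exact pow_le_pow_left₀ hnonneg hleft 2
  have le_g : S ^ 2 ≤ g β := by
    simp only [g, sub_self, mul_zero, zero_mul, add_zero]
    exact pow_le_pow_left₀ (by linarith) (by linarith) 2
  obtain ⟨z, hz, hgz⟩ := intermediate_value_Icc (neg_le_self hβ)
    continuous_g.continuousOn ⟨g_neg_le, le_g⟩
  have f_le : f z ≤ R := by
    by_contra! hlt
    have sq_lt : S ^ 2 < (M + f z - R) ^ 2 :=
      pow_lt_pow_left₀ (by linarith) (by linarith) two_ne_zero
    have cross_nonneg := mul_nonneg (sub_nonneg.mpr (sq_le_sq' hz.1 hz.2)) (σ_nonneg z)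
    simp only [g] at hgz
    linarith
  simp only [g, σ, min_eq_left f_le] at hgz
  exact ⟨z, hz, f_le, hgz⟩

-- `α`, `β` are the spectral gaps of the two blocks, `M` is the difference of their traces, `R`, `S`
-- are the prescribed gaps of the two marginals, and `σ` is the squared sine of the rotation angle.
theorem exists_rotation_of_le {α β M R S : ℝ} (hβ : 0 ≤ β) (hβα : β ≤ α) (hRM : R < M) (hSM : S ≤ M)
    (hR : R ≤ α + β) (hM : M + (α - β) ≤ R + S) :
    ∃ w z x σ : ℝ, w ^ 2 + x ^ 2 = α ^ 2 ∧ z ^ 2 + x ^ 2 = β ^ 2 ∧ 0 ≤ σ ∧ σ ≤ 1 ∧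
      (1 - σ) * (w + z) + σ * M = R ∧ (σ * (w + z) + (1 - σ) * M) ^ 2 + 4 * x ^ 2 * σ = S ^ 2 := by
  let w z := √(α ^ 2 - β ^ 2 + z ^ 2)
  have w_neg : w (-β) = α := by simp [w, Real.sqrt_sq (hβ.trans hβα)]
  have w_self : w β = α := by simp [w, Real.sqrt_sq (hβ.trans hβα)]
  obtain ⟨z, hz, hle, hquad⟩ := exists_mem_Icc_sq_add_eq (f := fun z ↦ w z + z) (by fun_prop) hβ hRM
    hSM (by linarith) (by linarith) (by linarith)
  have sq_x : √(β ^ 2 - z ^ 2) ^ 2 = β ^ 2 - z ^ 2 :=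
    Real.sq_sqrt (sub_nonneg.mpr (sq_le_sq' hz.1 hz.2))
  have sq_w : w z ^ 2 = α ^ 2 - β ^ 2 + z ^ 2 := Real.sq_sqrt (by nlinarith)
  set σ := (R - (w z + z)) / (M - (w z + z))
  have denom_pos : 0 < M - (w z + z) := by linarith
  have σ_mul : σ * (M - (w z + z)) = R - (w z + z) := div_mul_cancel₀ _ denom_pos.ne'
  refine ⟨w z, z, √(β ^ 2 - z ^ 2), σ, ?_, ?_, div_nonneg (by linarith) denom_pos.le,
    (div_le_one denom_pos).mpr (by linarith), by linarith, ?_⟩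
  · rw [sq_w, sq_x]; ring
  · rw [sq_x]; ring
  · rw [← hquad, sq_x, show σ * (w z + z) + (1 - σ) * M = M + (w z + z) - R by linarith]

theorem exists_rotation {α β M R S : ℝ} (hα : 0 ≤ α) (hβ : 0 ≤ β) (hRM : R < M) (hSM : S ≤ M)
    (hR : R ≤ α + β) (hM : M + |α - β| ≤ R + S) :
    ∃ w z x σ : ℝ, w ^ 2 + x ^ 2 = α ^ 2 ∧ z ^ 2 + x ^ 2 = β ^ 2 ∧ 0 ≤ σ ∧ σ ≤ 1 ∧
      (1 - σ) * (w + z) + σ * M = R ∧ (σ * (w + z) + (1 - σ) * M) ^ 2 + 4 * x ^ 2 * σ = S ^ 2 := by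
  rcases le_total β α with h | h
  · exact exists_rotation_of_le hβ h hRM hSM hR (by linarith [le_abs_self (α - β)])
  · obtain ⟨z, w, x, σ, hz, hw, hσ₀, hσ₁, hlin, hquad⟩ :=
      exists_rotation_of_le hα h hRM hSM (hR.trans_eq (add_comm α β))
        (by linarith [neg_le_abs (α - β)])
    exact ⟨w, z, x, σ, hw, hz, hσ₀, hσ₁, add_comm z w ▸ hlin, add_comm z w ▸ hquad⟩

variable {a b : ℝ} {l : Fin 4 → ℝ}

theorem areMarginalSpectra_of_le (hl : Monotone l) (hsum : ∑ k, l k = 1) (ha : a ≤ 1 / 2)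
    (hba : b ≤ a) (hb : l 0 + l 1 ≤ b) (hab : 2 * l 0 + l 1 + l 2 ≤ a + b)
    (hdiff : a - b ≤ min (l 2 - l 0) (l 3 - l 1)) :
    AreMarginalSpectra (Fin 2) (Fin 2) ![a, 1 - a] ![b, 1 - b] l := by
  have h01 : l 0 ≤ l 1 := hl (by decide)
  have h12 : l 1 ≤ l 2 := hl (by decide)
  have h23 : l 2 ≤ l 3 := hl (by decide)
  rw [Fin.sum_univ_four] at hsum
  obtain ⟨hdiff₂, hdiff₃⟩ := le_min_iff.mp hdiff
  have abs_even : |1 - a - b| = 1 - a - b := abs_of_nonneg (by linarith)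
  have abs_odd : |a - b| = a - b := abs_of_nonneg (by linarith)
  by_cases h₁ : a - b ≤ l 2 - l 1
  · exact (areMarginalSpectra_of_abs_le (x := l 3) (y := l 0) (z := l 2) (w := l 1) (by linarith)
      (by linarith) (by linarith)).congr (by simp only [Fin.prod_univ_four, cons_val]; ring)
  by_cases h₂ : 1 - a - b ≤ l 3 - l 1
  · exact (areMarginalSpectra_of_abs_le (x := l 3) (y := l 1) (z := l 2) (w := l 0) (by linarith)
      (by linarith) (by linarith)).congr (by simp only [Fin.prod_univ_four, cons_val]; ring)
  by_cases h₃ : 1 - a - b ≤ l 2 - l 0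
  · exact (areMarginalSpectra_of_abs_le (x := l 2) (y := l 0) (z := l 3) (w := l 1) (by linarith)
      (by linarith) (by linarith)).congr (by simp only [Fin.prod_univ_four, cons_val]; ring)
  have hgap : |l 3 - l 2 - (l 1 - l 0)| ≤ 2 * (1 - a - b) - (l 3 + l 2 - (l 1 + l 0)) :=
    abs_le.mpr ⟨by linarith, by linarith⟩
  obtain ⟨e, f, g, σ, he, hf, hσ₀, hσ₁, hlin, hquad⟩ :=
    exists_rotation (α := l 3 - l 2) (β := l 1 - l 0) (M := l 3 + l 2 - (l 1 + l 0))
      (R := 1 - 2 * a) (S := 1 - 2 * b) (by linarith) (by linarith) (by linarith) (by linarith)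
      (by linarith) (by linarith)
  exact (areMarginalSpectra_of_rotation (by linarith) he hf hσ₀ hσ₁ hlin hquad).congr
    (by simp only [Fin.prod_univ_four, cons_val]; ring)

end Sufficiency

section TwoQubits

theorem areMarginalSpectra_fin_two_iff {a b : ℝ} {l : Fin 4 → ℝ} (hl : Monotone l)
    (hsum : ∑ k, l k = 1) (ha : a ≤ 1 / 2) (hb : b ≤ 1 / 2) :
    AreMarginalSpectra (Fin 2) (Fin 2) ![a, 1 - a] ![b, 1 - b] l ↔
      l 0 + l 1 ≤ a ∧ l 0 + l 1 ≤ b ∧ 2 * l 0 + l 1 + l 2 ≤ a + b ∧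
        |a - b| ≤ min (l 2 - l 0) (l 3 - l 1) := by
  constructor
  · intro h
    have two_lowest {a b : ℝ} (h : AreMarginalSpectra (Fin 2) (Fin 2) ![a, 1 - a] ![b, 1 - b] l) :
        l 0 + l 1 ≤ a := by
      simpa using h.sum_le_left 0 (s := {0, 1}) rfl (c := l 1)
        (fun k hk ↦ hl (by fin_cases k <;> simp_all)) (fun k hk ↦ hl (by fin_cases k <;> simp_all))
    exact ⟨two_lowest h, two_lowest h.swap, h.add_le_add_of_monotone hl,
      abs_le'.mpr ⟨h.sub_le_min hl (by simp; linarith),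
        (neg_sub a b).trans_le (h.swap.sub_le_min hl (by simp; linarith))⟩⟩
  · rintro ⟨hla, hlb, hab, hdiff⟩
    rcases le_total b a with hba | hba
    · exact areMarginalSpectra_of_le hl hsum ha hba hlb hab ((le_abs_self _).trans hdiff)
    · exact (areMarginalSpectra_of_le hl hsum hb hba hla (hab.trans_eq (add_comm a b))
        ((le_abs_self _).trans ((abs_sub_comm b a).trans_le hdiff))).swap

variable {ρ : Matrix (Fin 2) (Fin 2) ℂ}

theorem eigenvalues_zero_add_eigenvalues_one (hρ : ρ.IsHermitian) (htrace : ρ.trace = 1) :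
    hρ.eigenvalues 0 + hρ.eigenvalues 1 = 1 := by
  have trace_eq := (hasSpectrum_eigenvalues hρ).trace_eq
  rw [htrace, Fin.sum_univ_two] at trace_eq
  exact mod_cast trace_eq.symm

theorem min_eigenvalues_le_half (hρ : ρ.IsHermitian) (htrace : ρ.trace = 1) :
    min (hρ.eigenvalues 0) (hρ.eigenvalues 1) ≤ 1 / 2 := by
  linarith [eigenvalues_zero_add_eigenvalues_one hρ htrace,
    min_add_max (hρ.eigenvalues 0) (hρ.eigenvalues 1),
    min_le_max (a := hρ.eigenvalues 0) (b := hρ.eigenvalues 1)]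

theorem hasSpectrum_min_eigenvalues (hρ : ρ.IsHermitian) (htrace : ρ.trace = 1) :
    HasSpectrum ρ ![min (hρ.eigenvalues 0) (hρ.eigenvalues 1),
      1 - min (hρ.eigenvalues 0) (hρ.eigenvalues 1)] := by
  have sum_eq := eigenvalues_zero_add_eigenvalues_one hρ htrace
  refine (hasSpectrum_eigenvalues hρ).congr ?_
  rcases min_choice (hρ.eigenvalues 0) (hρ.eigenvalues 1) with h | h
  · simp [h, ← sum_eq]
  · simp [h, ← sum_eq, mul_comm]

end TwoQubits

end Bravyi

open Bravyi

/-- Bravyi's conditions.  Let `ρ1, ρ2` be one-qubit density matrices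
with smaller eigenvalues `l1, l2` (the larger ones being `1 - l1`, `1 - l2`), and let
`ρ3` be a `4×4` density matrix with ascending eigenvalue list `l3 0 ≤ l3 1 ≤ l3 2 ≤ l3 3`.
Then `ρ1, ρ2, ρ3` are the reduced states of a pure state in `ℂ² ⊗ ℂ² ⊗ ℂ⁴` if and only
if `l1 ≥ l3 0 + l3 1`, `l2 ≥ l3 0 + l3 1`, `l1 + l2 ≥ 2·l3 0 + l3 1 + l3 2`, and
`|l1 - l2| ≤ min (l3 2 - l3 0) (l3 3 - l3 1)`. -/
theorem stmt_16 (ρ1 ρ2 : Matrix (Fin 2) (Fin 2) ℂ) (ρ3 : Matrix (Fin 4) (Fin 4) ℂ)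
    (h1 : ρ1.PosSemidef) (h2 : ρ2.PosSemidef) (h3 : ρ3.PosSemidef)
    (t1 : ρ1.trace = 1) (t2 : ρ2.trace = 1) (t3 : ρ3.trace = 1)
    (l1 l2 : ℝ)
    (hl1 : l1 = min (h1.1.eigenvalues 0) (h1.1.eigenvalues 1))
    (hl2 : l2 = min (h2.1.eigenvalues 0) (h2.1.eigenvalues 1))
    (l3 : Fin 4 → ℝ) (hmono : Monotone l3)
    (heig : ∃ σ : Equiv.Perm (Fin 4), ∀ i, l3 i = h3.1.eigenvalues (σ i)) :
    (∃ Ψ : Fin 2 → Fin 2 → Fin 4 → ℂ,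
        (∑ i, ∑ j, ∑ k, Complex.normSq (Ψ i j k)) = 1 ∧
        (∀ i i', ρ1 i i' = ∑ j, ∑ k, Ψ i j k * (starRingEnd ℂ) (Ψ i' j k)) ∧
        (∀ j j', ρ2 j j' = ∑ i, ∑ k, Ψ i j k * (starRingEnd ℂ) (Ψ i j' k)) ∧
        (∀ k k', ρ3 k k' = ∑ i, ∑ j, Ψ i j k * (starRingEnd ℂ) (Ψ i j k'))) ↔
      (l1 ≥ l3 0 + l3 1 ∧ l2 ≥ l3 0 + l3 1 ∧
       l1 + l2 ≥ 2 * l3 0 + l3 1 + l3 2 ∧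
       |l1 - l2| ≤ min (l3 2 - l3 0) (l3 3 - l3 1)) := by
  obtain ⟨σ, hσ⟩ := heig
  have spectrum₁ : HasSpectrum ρ1 ![l1, 1 - l1] := hl1 ▸ hasSpectrum_min_eigenvalues h1.1 t1
  have spectrum₂ : HasSpectrum ρ2 ![l2, 1 - l2] := hl2 ▸ hasSpectrum_min_eigenvalues h2.1 t2
  have spectrum₃ : HasSpectrum ρ3 l3 := by
    rw [show l3 = h3.1.eigenvalues ∘ σ from funext hσ]
    exact (hasSpectrum_eigenvalues h3.1).comp_equiv σ
  have sum_eq_one : ∑ k, l3 k = 1 := mod_cast spectrum₃.trace_eq.symm.trans t3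
  calc _ ↔ ∃ Ψ, HasMarginals Ψ ρ1 ρ2 ρ3 :=
        ⟨fun ⟨Ψ, _, hΨ⟩ ↦ ⟨Ψ, hΨ⟩, fun ⟨Ψ, hΨ⟩ ↦ ⟨Ψ, mod_cast hΨ.sum_normSq.trans t1, hΨ⟩⟩
    _ ↔ AreMarginalSpectra (Fin 2) (Fin 2) ![l1, 1 - l1] ![l2, 1 - l2] l3 :=
        exists_hasMarginals_iff rfl (spectrum₃.nonneg h3) spectrum₁ spectrum₂ spectrum₃
    _ ↔ _ := areMarginalSpectra_fin_two_iff hmono sum_eq_one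
        (hl1 ▸ min_eigenvalues_le_half h1.1 t1) (hl2 ▸ min_eigenvalues_le_half h2.1 t2)
end

section
/- Han–Zhang–Guo inequalities (necessity): let Ψ be a unit vector in (ℂ^m)^{⊗n} (a pure state of n particles each with an m-dimensional state space), with one-particle reduced density matrices ρ_1, …, ρ_n, and for each a let λ_1^{(a)} ≤ λ_2^{(a)} ≤ ⋯ ≤ λ_m^{(a)} be the eigenvalues of ρ_a in ascending order. Then for every pair of distinct indices a, b and every p ∈ {1, …, m−1}: Σ_{i=1}^p λ_i^{(a)} ≤ Σ_{i=1}^p λ_i^{(b)} + Σ_{c ≠ a,b} Σ_{i=1}^{m−1} λ_i^{(c)}. -/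
open scoped Matrix ComplexOrder

/-- The one-particle reduced density matrix at site `a` of a vector
`Ψ ∈ (ℂᵐ)^{⊗n}`: `ρ_a[s,t] = Σ Ψ_x conj(Ψ_y)`, the sum over pairs `x, y` with
`x_a = s`, `y_a = t` and `x_j = y_j` for `j ≠ a`. -/
noncomputable def siteReduced {m n : ℕ} (a : Fin n) (Ψ : (Fin n → Fin m) → ℂ) :
    Matrix (Fin m) (Fin m) ℂ :=
  Matrix.of fun s t =>
    ∑ x ∈ Finset.univ.filter (fun x : Fin n → Fin m => x a = s),
      Ψ x * (starRingEnd ℂ) (Ψ (Function.update x a t))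

/-!
Rotate every site into an eigenbasis of its reduced density matrix, so that an eigenvalue of `ρ_c`
is the total weight of the configurations having the corresponding state at `c`. Select a set
`S c` of states at every site. The configurations of the sites `c ≠ a` that avoid every `S c`
number `∏_{c ≠ a} #(S c)ᶜ`, so if `#(S a) + ∏_{c ≠ a} #(S c)ᶜ ≤ m`, then there are `#(S a)`
orthonormal vectors of `ℂᵐ` orthogonal to all the corresponding columns of `Ψ`. By Ky Fan's
principle the sum of the `#(S a)` lowest eigenvalues of `ρ_a` is at most the expectation of `ρ_a`
on these vectors; only the remaining columns contribute to it, and by Bessel's inequality and a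
union bound they contribute at most the weight of the `S c` with `c ≠ a`. The Han–Zhang–Guo
inequalities are the case `#(S a) = #(S b) = p` and `#(S c) = m - 1` otherwise.
-/

section

open Finset

section Orthonormal

theorem sum_le_sum_mul_of_sum_eq_card {ι R : Type*} [Fintype ι] [CommRing R] [LinearOrder R]
    [IsStrictOrderedRing R] {s : Finset ι} {l w : ι → R} (hl : ∀ i ∈ s, ∀ j ∉ s, l i ≤ l j)
    (hw_nonneg : ∀ i, 0 ≤ w i) (hw_le_one : ∀ i, w i ≤ 1) (hw_sum : ∑ i, w i = #s) :
    ∑ i ∈ s, l i ≤ ∑ i, w i * l i := by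
  obtain rfl | hs := s.eq_empty_or_nonempty
  · have hw : ∀ i, w i = 0 := by
      simpa [sum_eq_zero_iff_of_nonneg fun i _ => hw_nonneg i] using hw_sum
    simp [hw]
  set t := s.sup' hs l
  have h_le : ∀ i ∈ s, l i ≤ t := fun i hi => le_sup' l hi
  have h_ge : ∀ j ∉ s, t ≤ l j := fun j hj => sup'_le hs l fun i hi => hl i hi j hj
  have h_shift : ∑ i ∈ s, (l i - t) ≤ ∑ i, w i * (l i - t) :=
    calc ∑ i ∈ s, (l i - t) ≤ ∑ i ∈ s, w i * (l i - t) := sum_le_sum fun i hi => by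
          nlinarith [hw_le_one i, h_le i hi]
      _ ≤ ∑ i, w i * (l i - t) := sum_le_sum_of_subset_of_nonneg (subset_univ s) fun j _ hj =>
          mul_nonneg (hw_nonneg j) (sub_nonneg.mpr (h_ge j hj))
  simp only [mul_sub, sum_sub_distrib, ← sum_mul, hw_sum, sum_const, nsmul_eq_mul] at h_shift
  linarith

variable {𝕜 E : Type*} [RCLike 𝕜] [NormedAddCommGroup E] [InnerProductSpace 𝕜 E]

theorem exists_orthonormal_inner_eq_zero [FiniteDimensional 𝕜 E] {κ : Type*} (v : κ → E)
    (t : Finset κ) {p : ℕ} (hp : p + #t ≤ Module.finrank 𝕜 E) :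
    ∃ w : Fin p → E, Orthonormal 𝕜 w ∧ ∀ j ∈ t, ∀ k, inner 𝕜 (w k) (v j) = 0 := by
  classical
  set K := Submodule.span 𝕜 (t.image v : Set E)
  have hK : Module.finrank 𝕜 K ≤ #t := (finrank_span_finset_le_card _).trans card_image_le
  have hKp : p ≤ Module.finrank 𝕜 Kᗮ := by
    have := K.finrank_add_finrank_orthogonal
    omega
  let b := stdOrthonormalBasis 𝕜 Kᗮ
  refine ⟨fun k => b (Fin.castLE hKp k), ?_, fun j hj k => ?_⟩
  · exact (b.orthonormal.comp_linearIsometry Kᗮ.subtypeₗᵢ).comp _ (Fin.castLE_injective hKp)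
  · exact Submodule.inner_left_of_mem_orthogonal
      (Submodule.subset_span (by simpa using ⟨j, hj, rfl⟩)) (b _).2

theorem sum_le_sum_mul_norm_inner_sq {ι κ : Type*} [Fintype ι] [Fintype κ]
    (b : OrthonormalBasis ι 𝕜 E) {w : κ → E} (hw : Orthonormal 𝕜 w) {l : ι → ℝ} {s : Finset ι}
    (hs : #s = Fintype.card κ) (hl : ∀ i ∈ s, ∀ j ∉ s, l i ≤ l j) :
    ∑ i ∈ s, l i ≤ ∑ k, ∑ i, l i * ‖inner 𝕜 (w k) (b i)‖ ^ 2 := by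
  have h_sum : ∑ i, ∑ k, ‖inner 𝕜 (w k) (b i)‖ ^ 2 = #s := by
    rw [sum_comm, hs]
    simp [b.sum_sq_norm_inner_left, hw.1]
  have h_le_one (i) : ∑ k, ‖inner 𝕜 (w k) (b i)‖ ^ 2 ≤ 1 := by
    simpa using hw.sum_inner_products_le (b i) (s := univ)
  refine (sum_le_sum_mul_of_sum_eq_card hl (fun i => by positivity) h_le_one h_sum).trans_eq ?_
  rw [sum_comm]
  exact sum_congr rfl fun i _ => by rw [sum_mul]; exact sum_congr rfl fun k _ => mul_comm _ _

theorem sum_le_sum_compl_norm_sq {ι κ : Type*} [Fintype ι] [Fintype κ] [DecidableEq κ]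
    (b : OrthonormalBasis ι 𝕜 E) {v : κ → E} {l : ι → ℝ}
    (hv : ∀ x, ∑ j, ‖inner 𝕜 x (v j)‖ ^ 2 = ∑ i, l i * ‖inner 𝕜 x (b i)‖ ^ 2)
    {s : Finset ι} (hl : ∀ i ∈ s, ∀ j ∉ s, l i ≤ l j) {t : Finset κ}
    (hst : #s + #t ≤ Fintype.card ι) :
    ∑ i ∈ s, l i ≤ ∑ j ∈ tᶜ, ‖v j‖ ^ 2 := by
  have : FiniteDimensional 𝕜 E := b.toBasis.finiteDimensional_of_finite
  rw [← Module.finrank_eq_card_basis b.toBasis] at hst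
  obtain ⟨w, hw, hwv⟩ := exists_orthonormal_inner_eq_zero v t hst
  calc ∑ i ∈ s, l i ≤ ∑ k, ∑ i, l i * ‖inner 𝕜 (w k) (b i)‖ ^ 2 :=
        sum_le_sum_mul_norm_inner_sq b hw (by simp) hl
    _ = ∑ j, ∑ k, ‖inner 𝕜 (w k) (v j)‖ ^ 2 := by simp only [← hv]; exact sum_comm
    _ = ∑ j ∈ tᶜ, ∑ k, ‖inner 𝕜 (w k) (v j)‖ ^ 2 := by
        refine (sum_subset (subset_univ _) fun j _ hj => ?_).symm
        exact sum_eq_zero fun k _ => by simp [hwv j (by simpa using hj) k]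
    _ ≤ ∑ j ∈ tᶜ, ‖v j‖ ^ 2 := sum_le_sum fun j _ => hw.sum_inner_products_le (v j)

theorem sum_norm_inner_col_sq {ι κ : Type*} [Fintype ι] [DecidableEq ι] [Fintype κ]
    {A : Matrix ι κ 𝕜} {l : ι → ℝ} (hA : A * Aᴴ = Matrix.diagonal fun i => (l i : 𝕜))
    (x : EuclideanSpace 𝕜 ι) :
    ∑ j, ‖inner 𝕜 x (WithLp.toLp 2 (A.col j))‖ ^ 2 = ∑ i, l i * ‖x i‖ ^ 2 := by
  have h_inner (j) : inner 𝕜 x (WithLp.toLp 2 (A.col j)) = (star x.ofLp ᵥ* A) j :=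
    dotProduct_comm _ _
  have h_norm (y : κ → 𝕜) : ((∑ j, ‖y j‖ ^ 2 : ℝ) : 𝕜) = y ⬝ᵥ star y := by
    simp [dotProduct, RCLike.mul_conj]
  rw [← RCLike.ofReal_inj (K := 𝕜)]
  calc ((∑ j, ‖inner 𝕜 x (WithLp.toLp 2 (A.col j))‖ ^ 2 : ℝ) : 𝕜)
      = (star x.ofLp ᵥ* A) ⬝ᵥ star (star x.ofLp ᵥ* A) := by simp only [h_inner, ← h_norm]
    _ = star x.ofLp ⬝ᵥ (A * Aᴴ) *ᵥ x.ofLp := by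
      rw [Matrix.star_vecMul, star_star, ← Matrix.mulVec_mulVec, Matrix.dotProduct_mulVec _ A]
    _ = ((∑ i, l i * ‖x i‖ ^ 2 : ℝ) : 𝕜) := by
      simp [hA, dotProduct, Matrix.mulVec_diagonal, ← RCLike.conj_mul, mul_left_comm]

end Orthonormal

theorem sum_compl_piFinset_compl_le {κ M : Type*} [Fintype κ] [DecidableEq κ] {α : κ → Type*}
    [∀ c, Fintype (α c)] [∀ c, DecidableEq (α c)] [AddCommMonoid M] [PartialOrder M]
    [IsOrderedAddMonoid M] (S : ∀ c, Finset (α c)) {f : (∀ c, α c) → M} (hf : ∀ r, 0 ≤ f r) :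
    ∑ r ∈ (Fintype.piFinset fun c => (S c)ᶜ)ᶜ, f r ≤ ∑ c, ∑ r with r c ∈ S c, f r := by
  have h_cover :
      (Fintype.piFinset fun c => (S c)ᶜ)ᶜ = ({r | ∃ c, r c ∈ S c} : Finset (∀ c, α c)) := by
    ext r
    simp
  simp only [h_cover, sum_filter]
  rw [sum_comm]
  refine sum_le_sum fun r _ => ?_
  have h_nonneg : ∀ c ∈ univ, 0 ≤ if r c ∈ S c then f r else 0 := fun c _ => by
    split_ifs <;> simp [hf r]
  split_ifs with hr
  · obtain ⟨c, hc⟩ := hr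
    simpa only [if_pos hc] using single_le_sum h_nonneg (mem_univ c)
  · exact sum_nonneg h_nonneg

section Sites

variable {ι α R : Type*} [DecidableEq ι]

/-- The matrix of a tensor regarded as a map into site `c`: its row index is the state at `c`,
its column index the configuration of the remaining sites. -/
def siteFlatten (c : ι) (Φ : (ι → α) → R) : Matrix α ({j // j ≠ c} → α) R :=
  Matrix.of fun s r => Φ ((Equiv.funSplitAt c α).symm (s, r))

/-- The action of the matrix `V` on the tensor factor at site `c`. -/
def siteApply [Fintype α] [NonUnitalNonAssocSemiring R] (c : ι) (V : Matrix α α R)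
    (Φ : (ι → α) → R) : (ι → α) → R :=
  fun x => ∑ s, V (x c) s * Φ (Function.update x c s)

theorem update_funSplitAt_symm (c : ι) (s t : α) (r : {j // j ≠ c} → α) :
    Function.update ((Equiv.funSplitAt c α).symm (s, r)) c t =
      (Equiv.funSplitAt c α).symm (t, r) := by
  ext j
  by_cases h : j = c
  · subst h; simp
  · simp [h]

theorem siteFlatten_siteApply [Fintype α] [NonUnitalNonAssocSemiring R] (c : ι)
    (V : Matrix α α R) (Φ : (ι → α) → R) :
    siteFlatten c (siteApply c V Φ) = V * siteFlatten c Φ := by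
  ext s r
  simp [siteFlatten, siteApply, Matrix.mul_apply, update_funSplitAt_symm]

variable [Fintype ι] [Fintype α]

theorem sum_eq_sum_sum_funSplitAt {M : Type*} [AddCommMonoid M] (c : ι) (f : (ι → α) → M) :
    ∑ x, f x = ∑ s, ∑ r, f ((Equiv.funSplitAt c α).symm (s, r)) := by
  rw [← Fintype.sum_prod_type', ← (Equiv.funSplitAt c α).symm.sum_comp]

theorem siteApply_dotProduct_star_siteApply [DecidableEq α] [CommSemiring R] [StarRing R] (c : ι)
    {V : Matrix α α R} (hV : Vᴴ * V = 1) (Φ Ψ : (ι → α) → R) :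
    siteApply c V Φ ⬝ᵥ star (siteApply c V Ψ) = Φ ⬝ᵥ star Ψ := by
  have h_trace (A B : (ι → α) → R) :
      A ⬝ᵥ star B = (siteFlatten c A * (siteFlatten c B)ᴴ).trace := by
    rw [dotProduct, sum_eq_sum_sum_funSplitAt c]
    rfl
  rw [h_trace, h_trace, siteFlatten_siteApply, siteFlatten_siteApply, Matrix.conjTranspose_mul,
    Matrix.mul_assoc, Matrix.trace_mul_comm, Matrix.mul_assoc, Matrix.mul_assoc, hV, Matrix.mul_one]

theorem sum_norm_siteFlatten_col_sq [DecidableEq α] [NormedAddCommGroup R] (a : ι)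
    (Φ : (ι → α) → R) (c : {j // j ≠ a}) (S : Finset α) :
    ∑ r with r c ∈ S, ‖WithLp.toLp 2 ((siteFlatten a Φ).col r)‖ ^ 2 =
      ∑ x with x c ∈ S, ‖Φ x‖ ^ 2 := by
  simp only [sum_filter, PiLp.norm_sq_eq_of_L2]
  rw [sum_eq_sum_sum_funSplitAt a, sum_comm]
  refine sum_congr rfl fun r _ => ?_
  simp only [Equiv.funSplitAt_symm_apply, c.2, dite_false, siteFlatten]
  split_ifs <;> simp

end Sites

section ReducedDensity

variable {m n : ℕ}

theorem siteReduced_eq_siteFlatten_mul_conjTranspose (c : Fin n) (Ψ : (Fin n → Fin m) → ℂ) :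
    siteReduced c Ψ = siteFlatten c Ψ * (siteFlatten c Ψ)ᴴ := by
  ext s t
  simp only [siteReduced, Matrix.of_apply, sum_filter, Matrix.mul_apply]
  rw [sum_eq_sum_sum_funSplitAt c, sum_eq_single s]
  · simp [update_funSplitAt_symm, siteFlatten]
  · intro u _ hu
    simp [hu]
  · simp

theorem isHermitian_siteReduced (c : Fin n) (Ψ : (Fin n → Fin m) → ℂ) :
    (siteReduced c Ψ).IsHermitian := by
  rw [siteReduced_eq_siteFlatten_mul_conjTranspose]
  exact Matrix.isHermitian_mul_conjTranspose_self _

theorem sum_siteReduced_apply_self (c : Fin n) (Ψ : (Fin n → Fin m) → ℂ) (S : Finset (Fin m)) :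
    ∑ i ∈ S, siteReduced c Ψ i i = ((∑ x with x c ∈ S, ‖Ψ x‖ ^ 2 : ℝ) : ℂ) := by
  have h_diag (i) : siteReduced c Ψ i i = ∑ x with x c = i, (‖Ψ x‖ ^ 2 : ℂ) := by
    rw [siteReduced, Matrix.of_apply]
    refine sum_congr rfl fun x hx => ?_
    rw [← (mem_filter.mp hx).2, Function.update_eq_self, Complex.mul_conj']
  simp only [h_diag, sum_filter, Complex.ofReal_sum]
  rw [sum_comm]
  refine sum_congr rfl fun x _ => ?_
  rw [sum_ite_eq]
  split_ifs <;> simp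

theorem siteReduced_siteApply_self (c : Fin n) (V : Matrix (Fin m) (Fin m) ℂ)
    (Ψ : (Fin n → Fin m) → ℂ) :
    siteReduced c (siteApply c V Ψ) = V * siteReduced c Ψ * Vᴴ := by
  simp only [siteReduced_eq_siteFlatten_mul_conjTranspose, siteFlatten_siteApply,
    Matrix.conjTranspose_mul, Matrix.mul_assoc]

theorem siteReduced_siteApply_of_ne {c d : Fin n} (hdc : d ≠ c) {V : Matrix (Fin m) (Fin m) ℂ}
    (hV : Vᴴ * V = 1) (Ψ : (Fin n → Fin m) → ℂ) :
    siteReduced d (siteApply c V Ψ) = siteReduced d Ψ := by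
  -- Each entry of `ρ_d` is the inner product of two vectors obtained from `Ψ` by operations on the
  -- factor `d` alone, which commute with `siteApply c V`.
  ext s t
  let mask (Φ : (Fin n → Fin m) → ℂ) (x : Fin n → Fin m) : ℂ := if x d = s then Φ x else 0
  let move (Φ : (Fin n → Fin m) → ℂ) (x : Fin n → Fin m) : ℂ := Φ (Function.update x d t)
  have h_apply (Φ) : siteReduced d Φ s t = mask Φ ⬝ᵥ star (move Φ) := by
    simp [siteReduced, sum_filter, dotProduct, mask, move]
  have h_mask : mask (siteApply c V Ψ) = siteApply c V (mask Ψ) := by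
    ext x
    by_cases hx : x d = s <;> simp [mask, siteApply, hdc, hx]
  have h_move : move (siteApply c V Ψ) = siteApply c V (move Ψ) := by
    ext x
    simp [move, siteApply, hdc.symm, Function.update_comm hdc]
  rw [h_apply, h_apply, h_mask, h_move, siteApply_dotProduct_star_siteApply c hV]

theorem exists_siteReduced_eq_conj {V : Fin n → Matrix (Fin m) (Fin m) ℂ}
    (hV : ∀ c, (V c)ᴴ * V c = 1) (Ψ : (Fin n → Fin m) → ℂ) :
    ∃ Φ : (Fin n → Fin m) → ℂ, ∀ c, siteReduced c Φ = V c * siteReduced c Ψ * (V c)ᴴ := by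
  suffices h : ∀ T : Finset (Fin n), ∃ Φ : (Fin n → Fin m) → ℂ, ∀ c,
      siteReduced c Φ = if c ∈ T then V c * siteReduced c Ψ * (V c)ᴴ else siteReduced c Ψ by
    simpa using h univ
  intro T
  induction T using Finset.induction_on with
  | empty => exact ⟨Ψ, by simp⟩
  | insert d T hd ih =>
    obtain ⟨Φ, hΦ⟩ := ih
    refine ⟨siteApply d (V d) Φ, fun c => ?_⟩
    obtain rfl | hcd := eq_or_ne c d
    · simp [siteReduced_siteApply_self, hΦ, hd]
    · simp [siteReduced_siteApply_of_ne hcd (hV d), hΦ, hcd]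

theorem exists_siteReduced_eq_diagonal_eigenvalues (Ψ : (Fin n → Fin m) → ℂ) :
    ∃ Φ : (Fin n → Fin m) → ℂ, ∀ c, siteReduced c Φ =
      Matrix.diagonal fun i => ((isHermitian_siteReduced c Ψ).eigenvalues i : ℂ) := by
  let V (c : Fin n) : Matrix (Fin m) (Fin m) ℂ :=
    star (isHermitian_siteReduced c Ψ).eigenvectorUnitary
  have hV (c) : (V c)ᴴ * V c = 1 := by simp [V, ← Matrix.star_eq_conjTranspose]
  obtain ⟨Φ, hΦ⟩ := exists_siteReduced_eq_conj hV Ψ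
  refine ⟨Φ, fun c => (hΦ c).trans ?_⟩
  have h_spectral := (isHermitian_siteReduced c Ψ).conjStarAlgAut_star_eigenvectorUnitary
  rw [Unitary.conjStarAlgAut_star_apply] at h_spectral
  simp only [V, ← Matrix.star_eq_conjTranspose, star_star]
  exact h_spectral

theorem sum_le_sum_of_siteReduced_eq_diagonal {Φ : (Fin n → Fin m) → ℂ} {l : Fin n → Fin m → ℝ}
    (hΦ : ∀ c, siteReduced c Φ = Matrix.diagonal fun i => (l c i : ℂ)) (S : Fin n → Finset (Fin m))
    (a : Fin n) (h_min : ∀ i ∈ S a, ∀ j ∉ S a, l a i ≤ l a j)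
    (h_card : #(S a) + ∏ c ∈ univ.erase a, #(S c)ᶜ ≤ m) :
    ∑ i ∈ S a, l a i ≤ ∑ c ∈ univ.erase a, ∑ i ∈ S c, l c i := by
  let v r : EuclideanSpace ℂ (Fin m) := WithLp.toLp 2 ((siteFlatten a Φ).col r)
  let t := Fintype.piFinset fun c : {c // c ≠ a} => (S c)ᶜ
  have h_marginal (c) : ∑ i ∈ S c, l c i = ∑ x with x c ∈ S c, ‖Φ x‖ ^ 2 := by
    have := sum_siteReduced_apply_self c Φ (S c)
    simp only [hΦ, Matrix.diagonal_apply_eq] at this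
    exact_mod_cast this
  have h_card_t : #(S a) + #t ≤ Fintype.card (Fin m) := by
    rwa [Fintype.card_piFinset, Fintype.card_fin,
      ← prod_subtype (univ.erase a) (by simp) fun c => #(S c)ᶜ]
  have h_gram : siteFlatten a Φ * (siteFlatten a Φ)ᴴ = Matrix.diagonal fun i => (l a i : ℂ) := by
    rw [← siteReduced_eq_siteFlatten_mul_conjTranspose, hΦ]
  have h_quad (x : EuclideanSpace ℂ (Fin m)) : ∑ r, ‖inner ℂ x (v r)‖ ^ 2 =
      ∑ i, l a i * ‖inner ℂ x (EuclideanSpace.basisFun (Fin m) ℂ i)‖ ^ 2 := by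
    simp [v, sum_norm_inner_col_sq h_gram, EuclideanSpace.inner_single_right]
  calc ∑ i ∈ S a, l a i
      ≤ ∑ r ∈ tᶜ, ‖v r‖ ^ 2 :=
        sum_le_sum_compl_norm_sq (EuclideanSpace.basisFun (Fin m) ℂ) h_quad h_min h_card_t
    _ ≤ ∑ c : {c // c ≠ a}, ∑ r with r c ∈ S c, ‖v r‖ ^ 2 :=
        sum_compl_piFinset_compl_le (fun c : {c // c ≠ a} => S c) fun r => sq_nonneg ‖v r‖
    _ = ∑ c : {c // c ≠ a}, ∑ i ∈ S c, l c i :=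
        sum_congr rfl fun c _ =>
          (sum_norm_siteFlatten_col_sq a Φ c (S c)).trans (h_marginal c).symm
    _ = ∑ c ∈ univ.erase a, ∑ i ∈ S c, l c i :=
        (sum_subtype (univ.erase a) (by simp) fun c => ∑ i ∈ S c, l c i).symm

theorem sum_eigenvalues_siteReduced_le_sum (Ψ : (Fin n → Fin m) → ℂ)
    (S : Fin n → Finset (Fin m)) (a : Fin n)
    (h_min : ∀ i ∈ S a, ∀ j ∉ S a, (isHermitian_siteReduced a Ψ).eigenvalues i ≤
      (isHermitian_siteReduced a Ψ).eigenvalues j)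
    (h_card : #(S a) + ∏ c ∈ univ.erase a, #(S c)ᶜ ≤ m) :
    ∑ i ∈ S a, (isHermitian_siteReduced a Ψ).eigenvalues i ≤
      ∑ c ∈ univ.erase a, ∑ i ∈ S c, (isHermitian_siteReduced c Ψ).eigenvalues i := by
  obtain ⟨Φ, hΦ⟩ := exists_siteReduced_eq_diagonal_eigenvalues Ψ
  exact sum_le_sum_of_siteReduced_eq_diagonal hΦ S a h_min h_card

theorem stmt_17_general (Ψ : (Fin n → Fin m) → ℂ)
    (hherm : ∀ c : Fin n, (siteReduced c Ψ).IsHermitian) (lam : Fin n → Fin m → ℝ)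
    (heig : ∀ c, ∃ σ : Equiv.Perm (Fin m), ∀ i, lam c i = (hherm c).eigenvalues (σ i))
    (a : Fin n) (hmono : Monotone (lam a)) (q : Fin n → ℕ)
    (hq : q a + ∏ c ∈ univ.erase a, (m - q c) ≤ m) :
    ∑ i with i.val < q a, lam a i ≤ ∑ c ∈ univ.erase a, ∑ i with i.val < q c, lam c i := by
  choose σ hσ using heig
  let S (c : Fin n) : Finset (Fin m) := ({i | i.val < q c} : Finset (Fin m)).map (σ c).toEmbedding
  have h_sum (c) : ∑ i ∈ S c, (hherm c).eigenvalues i = ∑ i with i.val < q c, lam c i := by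
    simp [S, hσ]
  have h_min : ∀ i ∈ S a, ∀ j ∉ S a, (hherm a).eigenvalues i ≤ (hherm a).eigenvalues j := by
    intro i hi j hj
    obtain ⟨i, rfl⟩ := (σ a).surjective i
    obtain ⟨j, rfl⟩ := (σ a).surjective j
    rw [← hσ, ← hσ]
    simp only [S, mem_map_equiv, Equiv.symm_apply_apply, mem_filter_univ, not_lt] at hi hj
    exact hmono (Fin.le_def.mpr (hi.le.trans hj))
  have h_card : #(S a) + ∏ c ∈ univ.erase a, #(S c)ᶜ ≤ m := by
    have h_compl (c) : #(S c)ᶜ = m - q c := by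
      rw [card_compl, card_map, Fin.card_filter_val_lt, Fintype.card_fin]
      omega
    rw [card_map, Fin.card_filter_val_lt]
    simp only [h_compl]
    exact (Nat.add_le_add_right (min_le_right _ _) _).trans hq
  simpa only [h_sum] using sum_eigenvalues_siteReduced_le_sum Ψ S a h_min h_card

end ReducedDensity

end

/-- Han–Zhang–Guo inequalities, necessity.  Let `Ψ` be a unit vector
in `(ℂᵐ)^{⊗n}` with one-particle reduced density matrices `ρ_1, …, ρ_n`, and let
`lam a 0 ≤ lam a 1 ≤ ⋯ ≤ lam a (m-1)` be the eigenvalues of `ρ_a` in ascending order.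
Then for all `a ≠ b` and `1 ≤ p ≤ m - 1`,
`Σ_{i=1}^p λ_i^{(a)} ≤ Σ_{i=1}^p λ_i^{(b)} + Σ_{c≠a,b} Σ_{i=1}^{m-1} λ_i^{(c)}`. -/
theorem stmt_17 (m n : ℕ) (Ψ : (Fin n → Fin m) → ℂ)
    (hΨ : ∑ x : Fin n → Fin m, Complex.normSq (Ψ x) = 1)
    (hherm : ∀ a : Fin n, (siteReduced a Ψ).IsHermitian)
    (lam : Fin n → Fin m → ℝ)
    (hmono : ∀ a, Monotone (lam a))
    (heig : ∀ a, ∃ σ : Equiv.Perm (Fin m), ∀ i, lam a i = (hherm a).eigenvalues (σ i))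
    (a b : Fin n) (hab : a ≠ b) (p : ℕ) (hp1 : 1 ≤ p) (hp2 : p ≤ m - 1) :
    (∑ i ∈ Finset.univ.filter (fun i : Fin m => i.val < p), lam a i)
      ≤ (∑ i ∈ Finset.univ.filter (fun i : Fin m => i.val < p), lam b i)
        + ∑ c ∈ (Finset.univ.erase a).erase b,
            ∑ i ∈ Finset.univ.filter (fun i : Fin m => i.val < m - 1), lam c i := by
  let q (c : Fin n) : ℕ := if c ∈ (Finset.univ.erase a).erase b then m - 1 else p
  have hb : b ∈ Finset.univ.erase a := by simp [hab.symm]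
  have hqa : q a = p := by simp [q]
  have hqb : q b = p := by simp [q]
  have hqc : ∀ c ∈ (Finset.univ.erase a).erase b, q c = m - 1 := fun c hc => if_pos hc
  have hq : q a + ∏ c ∈ Finset.univ.erase a, (m - q c) ≤ m := by
    have h_others : ∏ c ∈ (Finset.univ.erase a).erase b, (m - q c) = 1 :=
      Finset.prod_eq_one fun c hc => by rw [hqc c hc]; omega
    rw [← Finset.mul_prod_erase _ _ hb, h_others, hqa, hqb]
    omega
  have h := stmt_17_general Ψ hherm lam heig a (hmono a) q hq
  rw [← Finset.add_sum_erase _ _ hb, hqa, hqb] at h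
  exact h.trans_eq (congrArg _ (Finset.sum_congr rfl fun c hc => by rw [hqc c hc]))
end

section
/- Coleman's theorem: let n ≥ 1 and let ρ be an m×m density matrix. Then ρ is the reduced one-party state of a system of n fermions — i.e. there exists a density matrix R on (ℂ^m)^{⊗n} supported on the antisymmetric subspace (meaning P_π R = sgn(π) R for every permutation π of the n factors, where P_π is the corresponding permutation operator) whose one-party reduced state equals ρ — if and only if every eigenvalue λ of ρ satisfies 0 ≤ λ ≤ 1/n. -/
open scoped Matrix ComplexOrder

/-- The permutation operator `P_π` on `(ℂᵐ)^{⊗n}`, acting on basis vectors by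
permuting the tensor factors: `P_π e_x = e_{x ∘ π⁻¹}`. -/
def permOp {m n : ℕ} (π : Equiv.Perm (Fin n)) :
    Matrix (Fin n → Fin m) (Fin n → Fin m) ℂ :=
  Matrix.of fun x y => if x = y ∘ π.symm then (1 : ℂ) else 0

/-! On antisymmetric tensors two different sites are never both occupied by the same one-particle
vector (Pauli exclusion), so that the occupation number operator `∑ᵢ |v⟩⟨v|ᵢ` of a unit vector `v`
acts as a projection.  Its expectation, which is `n⟨v, ρ v⟩` by symmetry, is therefore at most `1`.

Conversely, the Slater determinant of the eigenvectors of `ρ` with labels in an `n`-element set `S`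
has as its reduced state `1/n` times the projection onto their span.  Eigenvalues in `[0, 1/n]`
fill `n` equal rows of a doubly stochastic matrix, which Birkhoff's theorem decomposes into
permutations; the images of these `n` rows are random sets `S` whose Slater determinants mix
to `ρ`. -/

section

open Finset Matrix Equiv

variable {ι α β R 𝕜 : Type*}

section Antisymmetric

variable [Fintype ι] [DecidableEq ι]

/-- Antisymmetric tensors: functions of `ι`-indexed configurations `x : ι → α` on which a
permutation of the sites acts by its sign. -/
def IsAntisymmetric {M : Type*} [AddCommGroup M] (ψ : (ι → α) → M) : Prop :=
  ∀ (π : Perm ι) (x : ι → α), ψ (x ∘ π) = Perm.sign π • ψ x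

theorem permOp_mul_apply {m n : ℕ} (π : Perm (Fin n))
    (Γ : Matrix (Fin n → Fin m) (Fin n → Fin m) ℂ) (x y : Fin n → Fin m) :
    (permOp π * Γ : Matrix _ _ ℂ) x y = Γ (x ∘ π) y := by
  rw [Matrix.mul_apply]
  simp [permOp, Equiv.eq_comp_symm]

theorem forall_permOp_mul_eq_sign_smul_iff {m n : ℕ}
    {Γ : Matrix (Fin n → Fin m) (Fin n → Fin m) ℂ} :
    (∀ π : Perm (Fin n), permOp π * Γ = ((Perm.sign π : ℤ) : ℂ) • Γ) ↔
      ∀ y, IsAntisymmetric (Γ.col y) := by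
  simp only [← Matrix.ext_iff, permOp_mul_apply, Matrix.smul_apply, smul_eq_mul, IsAntisymmetric,
    col_apply, Units.smul_def, zsmul_eq_mul]
  exact ⟨fun h y π x => h π x y, fun h π x y => h y π x⟩

theorem IsAntisymmetric.apply_comp_swap {M : Type*} [AddCommGroup M] {ψ : (ι → α) → M}
    (hψ : IsAntisymmetric ψ) {i j : ι} (hij : i ≠ j) (x : ι → α) :
    ψ (x ∘ swap i j) = -ψ x := by
  rw [hψ, Perm.sign_swap hij, Units.neg_smul, one_smul]

theorem apply_comp_perm_of_isHermitian [Ring R] [StarRing R]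
    {Γ : Matrix (ι → α) (ι → α) R} (hΓ : Γ.IsHermitian)
    (hanti : ∀ y, IsAntisymmetric (Γ.col y)) (π : Perm ι) (x y : ι → α) :
    Γ (x ∘ π) (y ∘ π) = Γ x y := by
  have hrow (x y : ι → α) : Γ (x ∘ π) y = Perm.sign π • Γ x y := hanti y π x
  have hcol (x y : ι → α) : Γ x (y ∘ π) = Perm.sign π • Γ x y := by
    rw [← hΓ.apply, hrow, Units.smul_def, star_zsmul, hΓ.apply, Units.smul_def]
  rw [hrow, hcol, smul_smul, Int.units_mul_self, one_smul]

end Antisymmetric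

section ReducedState

variable [Fintype ι] [DecidableEq ι] [Fintype α] [DecidableEq α]

/-- The one-party reduced state at site `i`: the partial trace over all sites but `i`.  The
configurations `x` and `update x i t` agree off `i`, so that the sum runs over the common part. -/
def reducedState [Semiring R] (i : ι) :
    Matrix (ι → α) (ι → α) R →ₗ[R] Matrix α α R where
  toFun Γ := of fun s t => ∑ x with x i = s, Γ x (Function.update x i t)
  map_add' _ _ := by ext; simp [sum_add_distrib]
  map_smul' _ _ := by ext; simp [mul_sum]

theorem reducedState_apply [Semiring R] (i : ι) (Γ : Matrix (ι → α) (ι → α) R) (s t : α) :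
    reducedState i Γ s t = ∑ x with x i = s, Γ x (Function.update x i t) := rfl

theorem trace_reducedState [Semiring R] (i : ι) (Γ : Matrix (ι → α) (ι → α) R) :
    (reducedState i Γ).trace = Γ.trace := by
  simp only [trace, diag_apply, reducedState_apply]
  rw [← sum_fiberwise univ (fun x : ι → α => x i)]
  refine sum_congr rfl fun s _ => sum_congr rfl fun x hx => ?_
  rw [← (mem_filter.1 hx).2, Function.update_eq_self]

theorem reducedState_eq_of_isAntisymmetric [Ring R] [StarRing R]
    {Γ : Matrix (ι → α) (ι → α) R} (hΓ : Γ.IsHermitian)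
    (hanti : ∀ y, IsAntisymmetric (Γ.col y)) (i j : ι) :
    reducedState i Γ = reducedState j Γ := by
  ext s t
  simp only [reducedState_apply, sum_filter]
  rw [← ((swap i j).arrowCongr (Equiv.refl α)).sum_comp]
  refine sum_congr rfl fun x _ => ?_
  have hupdate : Function.update (x ∘ swap i j) i t = Function.update x j t ∘ swap i j := by
    simp [Function.update_comp_equiv]
  simp [Equiv.arrowCongr, hupdate, apply_comp_perm_of_isHermitian hΓ hanti]

theorem posSemidef_reducedState [Ring R] [PartialOrder R] [StarRing R] [AddLeftMono R] (i : ι)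
    {Γ : Matrix (ι → α) (ι → α) R} (hΓ : Γ.PosSemidef) : (reducedState i Γ).PosSemidef := by
  rcases isEmpty_or_nonempty α with _ | ⟨⟨a⟩⟩
  · rw [Subsingleton.elim (reducedState i Γ) 0]
    exact PosSemidef.zero
  have hsum : reducedState i Γ =
      ∑ x : ι → α with x i = a, Γ.submatrix (Function.update x i) (Function.update x i) := by
    ext s t
    simp only [reducedState_apply, Matrix.sum_apply, submatrix_apply]
    refine sum_nbij' (Function.update · i a) (Function.update · i s) ?_ ?_ ?_ ?_ ?_ <;> aesop
  rw [hsum]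
  exact posSemidef_sum _ fun x _ => hΓ.submatrix _

theorem reducedState_vecMulVec_prod [CommSemiring R] (i : ι) (f g : ι → α → R) :
    reducedState i (vecMulVec (fun x => ∏ j, f j (x j)) (fun x => ∏ j, g j (x j))) =
      (∏ j ∈ univ.erase i, f j ⬝ᵥ g j) • vecMulVec (f i) (g i) := by
  ext s t
  let T : ι → Finset α := Function.update (fun _ => univ) i {s}
  have hT : ({x | x i = s} : Finset (ι → α)) = Fintype.piFinset T := by
    simpa using (Fintype.piFinset_update_singleton_eq_filter_piFinset_eq
      (fun _ => (univ : Finset α)) i (mem_univ s)).symm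
  have hfactor (x : ι → α) : (∏ j, f j (x j)) * ∏ j, g j (Function.update x i t j) =
      ∏ j, f j (x j) * if j = i then g i t else g j (x j) := by
    rw [← prod_mul_distrib]
    refine prod_congr rfl fun j _ => ?_
    rcases eq_or_ne j i with rfl | hj <;> simp [*]
  simp only [reducedState_apply, vecMulVec_apply, hT, hfactor]
  rw [← prod_univ_sum T fun j a => f j a * if j = i then g i t else g j a,
    ← mul_prod_erase univ _ (mem_univ i)]
  have hoff : ∏ j ∈ univ.erase i, ∑ a ∈ T j, f j a * (if j = i then g i t else g j a) =
      ∏ j ∈ univ.erase i, f j ⬝ᵥ g j := by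
    refine prod_congr rfl fun j hj => ?_
    simp [T, ne_of_mem_erase hj, dotProduct]
  rw [hoff]
  simp [T, vecMulVec_apply, mul_comm]

end ReducedState

section SiteOp

variable [Fintype ι] [DecidableEq ι] [DecidableEq α]

/-- The one-particle operator `A` acting on the tensor factor at site `i`, and as the identity on
all other factors. -/
def siteOp [Zero R] (i : ι) (A : Matrix α α R) : Matrix (ι → α) (ι → α) R :=
  of fun x y => if ∀ j ≠ i, x j = y j then A (x i) (y i) else 0

theorem siteOp_transpose [Zero R] (i : ι) (A : Matrix α α R) : (siteOp i A)ᵀ = siteOp i Aᵀ := by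
  ext x y
  simp [siteOp, eq_comm]

theorem isHermitian_siteOp [NonUnitalSemiring R] [StarRing R] (i : ι) {A : Matrix α α R}
    (hA : A.IsHermitian) : (siteOp i A).IsHermitian := by
  refine Matrix.ext fun x y => ?_
  simp only [siteOp, conjTranspose_apply, of_apply, apply_ite star, hA.apply, star_zero,
    eq_comm (a := x _)]

variable [Fintype α]

theorem siteOp_mulVec_apply [NonUnitalNonAssocSemiring R] (i : ι) (A : Matrix α α R)
    (ψ : (ι → α) → R) (x : ι → α) :
    (siteOp i A *ᵥ ψ) x = ∑ s, A (x i) s * ψ (Function.update x i s) := by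
  symm
  refine Fintype.sum_of_injective _ (Function.update_injective x i) _ _ (fun y hy => ?_)
    fun s => ?_
  · have hne : ¬∀ j ≠ i, x j = y j := fun h =>
      hy ⟨y i, (Function.eq_update_iff.2 ⟨rfl, fun j hj => (h j hj).symm⟩).symm⟩
    simp only [siteOp, of_apply, if_neg hne, zero_mul]
  · have hoff (j : ι) (hj : j ≠ i) : x j = Function.update x i s j :=
      (Function.update_of_ne hj _ _).symm
    simp only [siteOp, of_apply, if_pos hoff, Function.update_self]

theorem siteOp_mul_siteOp [Semiring R] (i : ι) (A B : Matrix α α R) :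
    siteOp i A * siteOp i B = siteOp i (A * B) := by
  refine Matrix.ext_of_mulVec_single fun y => ?_
  ext x
  simp only [← mulVec_mulVec, siteOp_mulVec_apply, Matrix.mul_apply, Function.update_self,
    Function.update_idem, sum_mul, mul_sum, mul_assoc]
  exact sum_comm

theorem trace_mul_siteOp [CommSemiring R] (i : ι) (Γ : Matrix (ι → α) (ι → α) R)
    (A : Matrix α α R) : (Γ * siteOp i A).trace = (reducedState i Γ * A).trace := by
  have hdiag (x : ι → α) :
      (Γ * siteOp i A) x x = ∑ s, Γ x (Function.update x i s) * A s (x i) := by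
    rw [mul_apply_eq_vecMul, ← mulVec_transpose, siteOp_transpose, siteOp_mulVec_apply]
    simp only [transpose_apply, mul_comm]
  simp only [trace, diag_apply, hdiag, Matrix.mul_apply, reducedState_apply, sum_mul]
  rw [← sum_fiberwise univ (fun x : ι → α => x i)]
  refine sum_congr rfl fun t _ => ?_
  rw [sum_comm]
  refine sum_congr rfl fun s _ => sum_congr rfl fun x hx => ?_
  rw [(mem_filter.1 hx).2]

theorem trace_siteOp_vecMulVec_mul [CommSemiring R] (i : ι) (Γ : Matrix (ι → α) (ι → α) R)
    (u v : α → R) :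
    (siteOp i (vecMulVec u v) * Γ).trace = v ⬝ᵥ reducedState i Γ *ᵥ u := by
  rw [trace_mul_comm, trace_mul_siteOp, mul_vecMulVec, trace_vecMulVec, dotProduct_comm]

-- Exchanging the summation variables at the sites `i` and `j` flips the sign of the double sum.
theorem siteOp_mulVec_siteOp_mulVec_eq_zero [CommRing R] [IsAddTorsionFree R]
    {ψ : (ι → α) → R} (hψ : IsAntisymmetric ψ) {i j : ι} (hij : i ≠ j) (u u' v : α → R) :
    siteOp i (vecMulVec u v) *ᵥ siteOp j (vecMulVec u' v) *ᵥ ψ = 0 := by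
  ext x
  let F (s t : α) : R := ψ (Function.update (Function.update x i s) j t)
  have hF (s t : α) : F s t = -F t s := by
    rw [← hψ.apply_comp_swap hij]
    refine congrArg ψ (funext fun l => ?_)
    rcases eq_or_ne l i with rfl | hi
    · simp [hij]
    rcases eq_or_ne l j with rfl | hj
    · simp [hij]
    · simp [swap_apply_of_ne_of_ne, hi, hj]
  have hsum : ∑ s, ∑ t, v s * v t * F s t = 0 := by
    rw [← self_eq_neg]
    conv_lhs => rw [sum_comm]
    simp only [← sum_neg_distrib]
    refine sum_congr rfl fun s _ => sum_congr rfl fun t _ => ?_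
    rw [hF]
    ring
  calc (siteOp i (vecMulVec u v) *ᵥ siteOp j (vecMulVec u' v) *ᵥ ψ) x
      = ∑ s, u (x i) * v s * ∑ t, u' (x j) * v t * F s t := by
        simp only [siteOp_mulVec_apply, vecMulVec_apply, Function.update_of_ne hij.symm, F]
    _ = u (x i) * u' (x j) * ∑ s, ∑ t, v s * v t * F s t := by
        simp only [mul_sum]
        refine sum_congr rfl fun s _ => sum_congr rfl fun t _ => ?_
        ring
    _ = 0 := by rw [hsum, mul_zero]

end SiteOp

section PauliBound

theorem isHermitian_vecMulVec_star [Semiring R] [StarRing R] (v : α → R) :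
    (vecMulVec v (star v)).IsHermitian := by
  rw [Matrix.IsHermitian, conjTranspose_vecMulVec, star_star]

/-- The occupation number operator of the one-particle vector `v`: the sum over all sites of the
operator `|v⟩⟨v|` at that site. -/
def numberOp (ι : Type*) [Fintype ι] [DecidableEq ι] [DecidableEq α]
    [NonUnitalNonAssocSemiring R] [Star R] (v : α → R) : Matrix (ι → α) (ι → α) R :=
  ∑ i : ι, siteOp i (vecMulVec v (star v))

variable [Fintype ι] [DecidableEq ι] [DecidableEq α]

theorem isHermitian_numberOp [Semiring R] [StarRing R] (v : α → R) :
    (numberOp ι v).IsHermitian := by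
  simp only [numberOp, Matrix.IsHermitian, conjTranspose_sum,
    (isHermitian_siteOp _ (isHermitian_vecMulVec_star v)).eq]

variable [Fintype α]

theorem numberOp_mul_numberOp_mul [CommRing R] [StarRing R] [IsAddTorsionFree R]
    {v : α → R} (hv : star v ⬝ᵥ v = 1) {Γ : Matrix (ι → α) β R}
    (hΓ : ∀ y, IsAntisymmetric (Γ.col y)) :
    numberOp ι v * (numberOp ι v * Γ) = numberOp ι v * Γ := by
  have hpauli {i j : ι} (hij : i ≠ j) :
      siteOp i (vecMulVec v (star v)) * (siteOp j (vecMulVec v (star v)) * Γ) = 0 := by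
    ext x y
    exact congrFun (siteOp_mulVec_siteOp_mulVec_eq_zero (hΓ y) hij v v (star v)) x
  simp only [numberOp, Matrix.sum_mul, Matrix.mul_sum]
  refine sum_congr rfl fun i _ => ?_
  rw [sum_eq_single i (fun j _ hj => hpauli hj) (fun h => absurd (mem_univ i) h),
    ← Matrix.mul_assoc, siteOp_mul_siteOp, vecMulVec_mul_vecMulVec, hv, one_smul]

theorem trace_numberOp_mul [CommRing R] [StarRing R] {Γ : Matrix (ι → α) (ι → α) R}
    (hΓ : Γ.IsHermitian) (hanti : ∀ y, IsAntisymmetric (Γ.col y)) (i : ι) (v : α → R) :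
    (numberOp ι v * Γ).trace = Fintype.card ι * (star v ⬝ᵥ reducedState i Γ *ᵥ v) := by
  simp only [numberOp, Finset.sum_mul, trace_sum, trace_siteOp_vecMulVec_mul,
    reducedState_eq_of_isAntisymmetric hΓ hanti _ i, sum_const, card_univ, nsmul_eq_mul]

theorem trace_mul_nonneg_of_mul_mul_eq {m : Type*} [Fintype m] [CommRing R] [PartialOrder R]
    [StarRing R] [AddLeftMono R] {P Γ : Matrix m m R} (hP : P.IsHermitian) (hΓ : Γ.PosSemidef)
    (hidem : P * (P * Γ) = P * Γ) : 0 ≤ (P * Γ).trace := by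
  rw [← hidem, trace_mul_comm]
  simpa only [hP.eq] using (hΓ.mul_mul_conjTranspose_same P).trace_nonneg

theorem card_mul_dotProduct_reducedState_mulVec_le_trace [RCLike 𝕜]
    {Γ : Matrix (ι → α) (ι → α) 𝕜} (hΓ : Γ.PosSemidef) (hanti : ∀ y, IsAntisymmetric (Γ.col y))
    (i : ι) {v : α → 𝕜} (hv : star v ⬝ᵥ v = 1) :
    Fintype.card ι * (star v ⬝ᵥ reducedState i Γ *ᵥ v) ≤ Γ.trace := by
  have hidem := numberOp_mul_numberOp_mul hv hanti
  have hcompl : 0 ≤ ((1 - numberOp ι v) * Γ).trace :=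
    trace_mul_nonneg_of_mul_mul_eq (isHermitian_one.sub (isHermitian_numberOp v)) hΓ <| by
      simp only [Matrix.sub_mul, Matrix.mul_sub, Matrix.one_mul, hidem, sub_self, sub_zero]
  rwa [Matrix.sub_mul, Matrix.one_mul, trace_sub, trace_numberOp_mul hΓ.isHermitian hanti i,
    sub_nonneg] at hcompl

end PauliBound

section Slater

theorem equiv_eq_of_forall_ne {σ τ : α ≃ β} {i : α} (h : ∀ j ≠ i, σ j = τ j) : σ = τ := by
  have hi : τ.symm (σ i) = i := by
    by_contra hne
    exact hne (σ.injective (by rw [h _ hne, τ.apply_symm_apply]))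
  ext j
  rcases eq_or_ne j i with rfl | hj
  · exact τ.symm_apply_eq.1 hi
  · exact h j hj

variable [Fintype ι] [DecidableEq ι]

/-- The (unnormalised) Slater determinant of the columns of `V`, which are `ι`-many one-particle
vectors on the modes `α`. -/
def slaterDet [CommRing R] (V : Matrix α ι R) (x : ι → α) : R :=
  (V.submatrix x id).det

theorem isAntisymmetric_slaterDet [CommRing R] (V : Matrix α ι R) :
    IsAntisymmetric (slaterDet V) := fun π x => by
  rw [Units.smul_def, zsmul_eq_mul]
  exact det_permute π (V.submatrix x id)

theorem slaterDet_eq_sum_perm [CommRing R] (V : Matrix α ι R) (x : ι → α) :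
    slaterDet V x = ∑ σ : Perm ι, ((Perm.sign σ : ℤ) : R) * ∏ j, V (x j) (σ j) := by
  rw [slaterDet, ← det_transpose, det_apply']
  rfl

theorem card_nsmul_sum_perm_apply {M : Type*} [AddCommMonoid M] (i : ι) (g : ι → M) :
    Fintype.card ι • ∑ σ : Perm ι, g (σ i) = (Fintype.card ι).factorial • ∑ j, g j := by
  have hsite (j : ι) : ∑ σ : Perm ι, g (σ i) = ∑ σ : Perm ι, g (σ j) := by
    rw [← Equiv.sum_comp (Equiv.mulRight (swap i j))]
    simp
  calc Fintype.card ι • ∑ σ : Perm ι, g (σ i)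
      = ∑ j : ι, ∑ σ : Perm ι, g (σ j) := by simp [← hsite]
    _ = ∑ σ : Perm ι, ∑ j, g (σ j) := sum_comm
    _ = ∑ σ : Perm ι, ∑ j, g j := sum_congr rfl fun σ _ => Equiv.sum_comp σ g
    _ = (Fintype.card ι).factorial • ∑ j, g j := by simp [Fintype.card_perm]

/-- The pure state of `ι`-many fermions given by the normalised Slater determinant of the
columns of `V`. -/
noncomputable def slaterState [Field R] [StarRing R] (V : Matrix α ι R) :
    Matrix (ι → α) (ι → α) R :=
  ((Fintype.card ι).factorial : R)⁻¹ • vecMulVec (slaterDet V) (star (slaterDet V))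

theorem isAntisymmetric_col_slaterState [Field R] [StarRing R] (V : Matrix α ι R) (y : ι → α) :
    IsAntisymmetric ((slaterState V).col y) := fun π x => by
  simp only [slaterState, col_apply, Matrix.smul_apply, vecMulVec_apply,
    isAntisymmetric_slaterDet V π x, smul_mul_assoc, smul_comm (Perm.sign π)]

theorem posSemidef_slaterState [Finite α] [RCLike 𝕜] (V : Matrix α ι 𝕜) :
    (slaterState V).PosSemidef :=
  (posSemidef_vecMulVec_self_star _).smul (by positivity)

variable [Fintype α] [DecidableEq α]

-- Orthonormality kills every cross term of two permutations that differ off the site `i`.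
theorem reducedState_vecMulVec_slaterDet [CommRing R] [StarRing R] {V : Matrix α ι R}
    (hV : Vᴴ * V = 1) (i : ι) :
    reducedState i (vecMulVec (slaterDet V) (star (slaterDet V))) =
      ∑ σ : Perm ι, vecMulVec (V.col (σ i)) (star (V.col (σ i))) := by
  have hexpand : vecMulVec (slaterDet V) (star (slaterDet V)) =
      ∑ σ : Perm ι, ∑ τ : Perm ι, (((Perm.sign σ : ℤ) : R) * ((Perm.sign τ : ℤ) : R)) •
        vecMulVec (fun x => ∏ j, V.col (σ j) (x j)) (fun x => ∏ j, star (V.col (τ j)) (x j)) := by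
    ext x y
    simp only [vecMulVec_apply, Pi.star_apply, slaterDet_eq_sum_perm, star_sum, star_mul',
      star_intCast, star_prod, sum_mul_sum, Matrix.sum_apply, Matrix.smul_apply, smul_eq_mul,
      col_apply]
    exact sum_congr rfl fun σ _ => sum_congr rfl fun τ _ => by ring
  have hortho (σ τ : Perm ι) :
      ∏ j ∈ univ.erase i, V.col (σ j) ⬝ᵥ star (V.col (τ j)) = if σ = τ then 1 else 0 := by
    have hentry (j : ι) : V.col (σ j) ⬝ᵥ star (V.col (τ j)) = (1 : Matrix ι ι R) (τ j) (σ j) := by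
      rw [dotProduct_comm, ← hV]
      rfl
    have hagree : (∀ j ∈ univ.erase i, τ j = σ j) ↔ σ = τ :=
      ⟨fun h => (equiv_eq_of_forall_ne (i := i) fun j hj => h j (by simp [hj])).symm,
        fun h j _ => by rw [h]⟩
    simp only [hentry, Matrix.one_apply, prod_ite_zero, prod_const_one, hagree]
  have hsign (σ : Perm ι) : ((Perm.sign σ : ℤ) : R) * ((Perm.sign σ : ℤ) : R) = 1 := by
    rw [← Int.cast_mul, ← Units.val_mul, Int.units_mul_self, Units.val_one, Int.cast_one]
  simp only [hexpand, map_sum, map_smul, reducedState_vecMulVec_prod, hortho, ite_smul, one_smul,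
    zero_smul, smul_ite, smul_zero, sum_ite_eq, mem_univ, if_true, hsign]

theorem reducedState_slaterState [Field R] [CharZero R] [StarRing R] {V : Matrix α ι R}
    (hV : Vᴴ * V = 1) (i : ι) :
    reducedState i (slaterState V) = (Fintype.card ι : R)⁻¹ • (V * Vᴴ) := by
  have : Nonempty ι := ⟨i⟩
  have hcard : (Fintype.card ι : R) ≠ 0 := Nat.cast_ne_zero.2 Fintype.card_ne_zero
  have hfact : ((Fintype.card ι).factorial : R) ≠ 0 := Nat.cast_ne_zero.2 (Nat.factorial_ne_zero _)
  have hsum : V * Vᴴ = ∑ j, vecMulVec (V.col j) (star (V.col j)) := by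
    ext s t
    simp [Matrix.mul_apply, Matrix.sum_apply, vecMulVec_apply]
  rw [slaterState, map_smul, reducedState_vecMulVec_slaterDet hV, hsum, inv_smul_eq_iff₀ hfact,
    smul_comm, eq_inv_smul_iff₀ hcard, Nat.cast_smul_eq_nsmul, Nat.cast_smul_eq_nsmul]
  exact card_nsmul_sum_perm_apply i fun j => vecMulVec (V.col j) (star (V.col j))

end Slater

section EmbeddingWeights

variable {K : Type*} [Field K] [LinearOrder K] [IsStrictOrderedRing K]
  [Fintype ι] [Fintype α] [DecidableEq α] {d : α → K}

-- The rows outside the range of `e` share what the columns still miss equally.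
theorem exists_mem_doublyStochastic_row_eq (e : ι ↪ α) (hd₀ : ∀ a, 0 ≤ d a)
    (hd₁ : ∑ a, d a = 1) (hd : ∀ a, Fintype.card ι * d a ≤ 1) :
    ∃ M ∈ doublyStochastic K α, ∀ j, M.row (e j) = d := by
  let r : K := Fintype.card α - Fintype.card ι
  have hr : 0 ≤ r := sub_nonneg.2 (Nat.cast_le.2 (Fintype.card_le_of_embedding e))
  have hmiss : ∑ a, (1 - Fintype.card ι * d a) = r := by
    simp [sum_sub_distrib, ← mul_sum, hd₁, r]
  have hmiss₀ (a : α) : 0 ≤ 1 - Fintype.card ι * d a := sub_nonneg.2 (hd a)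
  refine ⟨of fun b a => if b ∈ univ.map e then d a else (1 - Fintype.card ι * d a) / r,
    mem_doublyStochastic_iff_sum.2 ⟨fun b a => ?_, fun b => ?_, fun a => ?_⟩, fun j => ?_⟩
  · rw [of_apply]
    split_ifs
    exacts [hd₀ a, div_nonneg (hmiss₀ a) hr]
  · simp only [of_apply]
    split_ifs with hb
    · exact hd₁
    · have hlt : Fintype.card ι < Fintype.card α :=
        Fintype.card_lt_of_injective_of_notMem e e.injective (b := b) (by simpa using hb)
      rw [← sum_div, hmiss, div_self (sub_pos.2 (Nat.cast_lt.2 hlt)).ne']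
  · have hcompl : (#(univ.map e)ᶜ : K) = r := by
      rw [card_compl, Nat.cast_sub (card_le_univ _), card_map, card_univ]
    have hshare : r * ((1 - Fintype.card ι * d a) / r) = 1 - Fintype.card ι * d a :=
      mul_div_cancel_of_imp' fun hr₀ =>
        (sum_eq_zero_iff_of_nonneg fun b _ => hmiss₀ b).1 (hmiss.trans hr₀) a (mem_univ a)
    simp only [of_apply]
    rw [← sum_add_sum_compl (univ.map e), sum_ite_of_true fun _ hb => hb,
      sum_ite_of_false fun _ hb => mem_compl.1 hb, sum_const, sum_const, card_map, card_univ,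
      nsmul_eq_mul, nsmul_eq_mul, hcompl, hshare, add_sub_cancel]
  · ext a
    simp

theorem exists_embedding_weights (hd₀ : ∀ a, 0 ≤ d a) (hd₁ : ∑ a, d a = 1)
    (hd : ∀ a, Fintype.card ι * d a ≤ 1) :
    ∃ w : (ι ↪ α) → K, (∀ f, 0 ≤ w f) ∧ ∀ j a, ∑ f with f j = a, w f = d a := by
  classical
  have hcard : Fintype.card ι ≤ Fintype.card α := by
    have := sum_le_sum fun a (_ : a ∈ univ) => hd a
    rw [← mul_sum, hd₁] at this
    simpa using this
  obtain ⟨e⟩ := Function.Embedding.nonempty_of_card_le hcard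
  obtain ⟨M, hM, hrow⟩ := exists_mem_doublyStochastic_row_eq e hd₀ hd₁ hd
  obtain ⟨w, hw₀, -, hw⟩ := exists_eq_sum_perm_of_mem_doublyStochastic hM
  refine ⟨fun f => ∑ σ with e.trans σ.toEmbedding = f, w σ, fun f => sum_nonneg fun σ _ => hw₀ σ,
    fun j a => ?_⟩
  calc ∑ f with f j = a, ∑ σ with e.trans σ.toEmbedding = f, w σ
      = ∑ σ with σ (e j) = a, w σ := by
        rw [← sum_fiberwise_of_maps_to (t := {f : ι ↪ α | f j = a})
          (g := fun σ : Perm α => e.trans σ.toEmbedding) (by simp)]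
        refine sum_congr rfl fun f hf => ?_
        rw [filter_filter]
        refine sum_congr (filter_congr fun σ _ => ?_) fun _ _ => rfl
        rw [iff_and_self]
        rintro rfl
        simpa using hf
    _ = M (e j) a := by
        simp [← hw, Matrix.sum_apply, Equiv.Perm.permMatrix, PEquiv.toMatrix_apply, sum_filter]
    _ = d a := congrFun (hrow j) a

end EmbeddingWeights

section Coleman

variable [Fintype ι] [Fintype α] [DecidableEq α]

theorem sum_smul_submatrix_mul_conjTranspose [CommSemiring R] [StarRing R] {w : (ι ↪ α) → R}
    {d : α → R} (hw : ∀ j a, ∑ f with f j = a, w f = d a) (U : Matrix β α R) :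
    ∑ f, w f • (U.submatrix id f * (U.submatrix id f)ᴴ) =
      Fintype.card ι • (U * diagonal d * Uᴴ) := by
  have hmarginal (j : ι) (g : α → R) : ∑ f, w f * g (f j) = ∑ a, d a * g a := by
    rw [← sum_fiberwise univ fun f : ι ↪ α => f j]
    refine sum_congr rfl fun a _ => ?_
    rw [← hw j a, sum_mul]
    refine sum_congr rfl fun f hf => ?_
    rw [(mem_filter.1 hf).2]
  ext s t
  calc (∑ f, w f • (U.submatrix id f * (U.submatrix id f)ᴴ)) s t
      = ∑ j, ∑ f : ι ↪ α, w f * (U s (f j) * star (U t (f j))) := by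
        rw [sum_comm]
        simp only [Matrix.sum_apply, Matrix.smul_apply, Matrix.mul_apply, smul_eq_mul, mul_sum,
          submatrix_apply, conjTranspose_apply, id]
    _ = Fintype.card ι • ∑ a, d a * (U s a * star (U t a)) := by
        simp only [hmarginal _ fun a => U s a * star (U t a), sum_const, card_univ]
    _ = (Fintype.card ι • (U * diagonal d * Uᴴ)) s t := by
        rw [Matrix.smul_apply, Matrix.mul_apply]
        simp only [mul_diagonal, conjTranspose_apply, mul_comm (U s _), mul_assoc]

variable [DecidableEq ι] [RCLike 𝕜]

theorem exists_isAntisymmetric_reducedState_eq [Fintype β] [DecidableEq β] (i : ι)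
    {U : Matrix β α 𝕜} (hU : Uᴴ * U = 1) {d : α → ℝ} (hd₀ : ∀ a, 0 ≤ d a) (hd₁ : ∑ a, d a = 1)
    (hd : ∀ a, Fintype.card ι * d a ≤ 1) :
    ∃ Γ : Matrix (ι → β) (ι → β) 𝕜, Γ.PosSemidef ∧ (∀ y, IsAntisymmetric (Γ.col y)) ∧
      reducedState i Γ = U * diagonal (fun a => (d a : 𝕜)) * Uᴴ := by
  obtain ⟨w, hw₀, hw⟩ := exists_embedding_weights (ι := ι) hd₀ hd₁ hd
  refine ⟨∑ f : ι ↪ α, (w f : 𝕜) • slaterState (U.submatrix id f), ?_, fun y π x => ?_, ?_⟩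
  · exact posSemidef_sum _ fun f _ =>
      (posSemidef_slaterState _).smul (RCLike.ofReal_nonneg.2 (hw₀ f))
  · have hcol (f : ι ↪ α) := isAntisymmetric_col_slaterState (U.submatrix id f) y π x
    simp only [col_apply] at hcol
    simp only [col_apply, Matrix.sum_apply, Matrix.smul_apply, hcol, smul_sum,
      smul_comm (Perm.sign π)]
  · have : Nonempty ι := ⟨i⟩
    have hcard : (Fintype.card ι : 𝕜) ≠ 0 := Nat.cast_ne_zero.2 Fintype.card_ne_zero
    have hisom (f : ι ↪ α) : (U.submatrix id f)ᴴ * U.submatrix id f = 1 := by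
      rw [conjTranspose_submatrix, ← submatrix_mul _ _ f id f Function.bijective_id, hU,
        submatrix_one_embedding]
    have hw' (j : ι) (a : α) : ∑ f with f j = a, (w f : 𝕜) = d a := by
      rw [← RCLike.ofReal_sum, hw]
    simp only [map_sum, map_smul, reducedState_slaterState (hisom _),
      smul_comm _ (Fintype.card ι : 𝕜)⁻¹]
    rw [← smul_sum, sum_smul_submatrix_mul_conjTranspose hw' U, inv_smul_eq_iff₀ hcard,
      Nat.cast_smul_eq_nsmul]

theorem star_dotProduct_eigenvectorBasis {ρ : Matrix α α 𝕜} (hρ : ρ.IsHermitian) (a : α) :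
    star (hρ.eigenvectorBasis a : α → 𝕜) ⬝ᵥ hρ.eigenvectorBasis a = 1 := by
  have h := hρ.eigenvectorBasis.orthonormal.1 a
  rw [dotProduct_comm, ← EuclideanSpace.inner_eq_star_dotProduct, inner_self_eq_norm_sq_to_K, h]
  simp

theorem star_dotProduct_mulVec_eigenvectorBasis {ρ : Matrix α α 𝕜} (hρ : ρ.IsHermitian) (a : α) :
    star (hρ.eigenvectorBasis a : α → 𝕜) ⬝ᵥ ρ *ᵥ hρ.eigenvectorBasis a = hρ.eigenvalues a := by
  rw [hρ.mulVec_eigenvectorBasis, dotProduct_smul, star_dotProduct_eigenvectorBasis,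
    RCLike.real_smul_eq_coe_mul, mul_one]

theorem stmt_18_general (i : ι) {ρ : Matrix α α 𝕜} (hρ : ρ.IsHermitian) (htr : ρ.trace = 1) :
    (∃ Γ : Matrix (ι → α) (ι → α) 𝕜, Γ.PosSemidef ∧ Γ.trace = 1 ∧
        (∀ y, IsAntisymmetric (Γ.col y)) ∧ reducedState i Γ = ρ) ↔
      ∀ a, 0 ≤ hρ.eigenvalues a ∧ hρ.eigenvalues a ≤ 1 / Fintype.card ι := by
  have : Nonempty ι := ⟨i⟩
  have hcard : (0 : ℝ) < Fintype.card ι := Nat.cast_pos.2 Fintype.card_pos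
  simp only [le_div_iff₀' hcard]
  constructor
  · rintro ⟨Γ, hΓ, hΓtr, hanti, hred⟩ a
    have hunit := star_dotProduct_eigenvectorBasis hρ a
    have hρ₀ : ρ.PosSemidef := hred ▸ posSemidef_reducedState i hΓ
    have hpauli := card_mul_dotProduct_reducedState_mulVec_le_trace hΓ hanti i hunit
    rw [hred, star_dotProduct_mulVec_eigenvectorBasis, hΓtr] at hpauli
    exact ⟨hρ₀.eigenvalues_nonneg a, by exact_mod_cast hpauli⟩
  · intro h
    have hsum : ∑ a, hρ.eigenvalues a = 1 := by
      have := hρ.trace_eq_sum_eigenvalues.symm.trans htr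
      exact_mod_cast this
    obtain ⟨Γ, hΓ, hanti, hred⟩ := exists_isAntisymmetric_reducedState_eq (𝕜 := 𝕜) i
      (Unitary.coe_star_mul_self hρ.eigenvectorUnitary) (fun a => (h a).1) hsum fun a => (h a).2
    have hred' : reducedState i Γ = ρ := by
      rw [hred]
      exact hρ.spectral_theorem.symm
    exact ⟨Γ, hΓ, by rw [← trace_reducedState i, hred', htr], hanti, hred'⟩

end Coleman

end

/-- Coleman's theorem.  An `m×m` density matrix `ρ` is the reduced
one-party state of a system of `n` fermions — i.e. there is a density matrix `R` on
`(ℂᵐ)^{⊗n}` supported on the antisymmetric subspace (`P_π R = sgn(π) R` for all `π`)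
whose one-party reduced state is `ρ` — if and only if every eigenvalue `λ` of `ρ`
satisfies `0 ≤ λ ≤ 1/n`. -/
theorem stmt_18 (n m : ℕ) (hn : 1 ≤ n) (ρ : Matrix (Fin m) (Fin m) ℂ)
    (hρ : ρ.PosSemidef) (htr : ρ.trace = 1) :
    (∃ R : Matrix (Fin n → Fin m) (Fin n → Fin m) ℂ,
        R.PosSemidef ∧ R.trace = 1 ∧
        (∀ π : Equiv.Perm (Fin n),
          permOp π * R = ((Equiv.Perm.sign π : ℤ) : ℂ) • R) ∧
        (∀ s t, ρ s t = ∑ x ∈ Finset.univ.filter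
            (fun x : Fin n → Fin m => x ⟨0, hn⟩ = s),
          R x (Function.update x ⟨0, hn⟩ t))) ↔
      ∀ i, 0 ≤ hρ.1.eigenvalues i ∧ hρ.1.eigenvalues i ≤ 1 / n := by
  simp only [forall_permOp_mul_eq_sign_smul_iff]
  simpa [← Matrix.ext_iff, reducedState_apply, eq_comm] using
    stmt_18_general (⟨0, hn⟩ : Fin n) hρ.1 htr
end
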